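/- There exist absolute constants C0, c0 > 0 such that for all integers d, k ≥ 1, all ε ∈ (0,1) and all σ ≥ 0, there is a sample size m ≤ C0 · d · (log(d+2))^{C0} · (k/ε)^{C0} and a (measurable) estimator A : (ℝ^d × ℝ)^m → C_k^+ with the following property: for every target f ∈ C_k^+, i.e. f(x) = Σ_{i=1}^k α_i · max(0, ⟨w^{(i)}, x⟩) with α_i > 0 and ‖w^{(i)}‖₂ = 1, and for i.i.d. samples (x^{(j)}, y^{(j)}), j = 1,…,m, where x^{(j)} ∼ N^d and y^{(j)} = f(x^{(j)}) + ξ_j with ξ_j zero-mean σ-subgaussian and independent of x^{(j)}, with probability at least 9/10 the output h = A((x^{(j)}, y^{(j)})_{j=1}^m) lies in C_k^+ and satisfies E_{x∼N^d}[(f(x) − h(x))²] ≤ c0 · ε² · (σ² + E_{x∼N^d}[f(x)²]). -/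

import Mathlib

/-!
The estimator matches correlations. For a target `f = ∑ α_i neuron(w_i)` and labels `y = f(x) + ξ`, the
expectation of `y · neuron(v)(x)` is `E[f · neuron(v)]`, because the noise is centred and independent of
`x`. The estimator returns the first member of a fixed dense sequence of admissible parameters whose
exact correlations with all test neurons agree, up to a tolerance `2 δ (σ + ∑ β)`, with the empirical
correlations of the sample. Working with sequences (of parameters and of test directions) makes the
choice measurable.

Uniform deviation (`deviation_seq`): with probability at least `9/10`, all empirical correlations with
tests in the unit ball are within `δ M`, `M = σ + ∑ α`, of their means once `m ≥ 12800 d / δ²`. Since ReLU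
is 1-Lipschitz, symmetrization and the contraction principle (`symmetrization_step`, exchanged one
sample at a time by `tensorize`) compare the deviation with the norm of `∑ ± y_j x_j`, whose second
moment is at most `8 m d M²`; Markov's inequality then suffices. On this event the target lies in the
interior of the feasible set, so the dense sequence has a feasible member (`exists_feasible`), and any
feasible `h = ∑ β_i neuron(u_i)` satisfies
`|E[(f - h) neuron(v)]| ≤ δ (3 σ + ∑ α + 2 ∑ β)` for every `v` in the unit ball
(`correlation_of_feasible`).

Risk (`risk_bound`): expanding one factor of `E (f - h)²` along the neurons of `f` and `h` gives
`E (f - h)² ≤ δ (∑ α + ∑ β) (3 σ + ∑ α + 2 ∑ β)`. A unit neuron has mean between `1/5` and `1`, so positive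
coefficients give `∑ α ≤ 5 E f ≤ 5 ‖f‖` and `∑ β ≤ 5 E h ≤ 5 (∑ α + ‖f - h‖)`. With `δ = ε² / 200` the
`‖f - h‖²` term is absorbed. The sample size is of order `d / ε⁴`, with no dependence on `k`.
-/

open MeasureTheory ProbabilityTheory Real Finset

noncomputable def stdGaussian (d : ℕ) : Measure (Fin d → ℝ) :=
  Measure.pi fun _ => gaussianReal 0 1

/-- One-hidden-layer ReLU network `x ↦ ∑ i, α i * max 0 ⟨w i, x⟩`. -/
noncomputable def reluNet {d k : ℕ} (α : Fin k → ℝ) (w : Fin k → Fin d → ℝ)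
    (x : Fin d → ℝ) : ℝ :=
  ∑ i, α i * max 0 (∑ j, w i j * x j)

/-- `ν` is a zero-mean `σ`-subgaussian probability distribution on `ℝ`. -/
def IsZeroMeanSubgaussian (ν : Measure ℝ) (σ : ℝ) : Prop :=
  IsProbabilityMeasure ν ∧ (∫ t, t ∂ν) = 0 ∧
    ∀ l : ℝ, Integrable (fun t => Real.exp (l * t)) ν ∧
      (∫ t, Real.exp (l * t) ∂ν) ≤ Real.exp (l ^ 2 * σ ^ 2 / 2)

/-- Distribution of `m` i.i.d. labeled samples `(x, f x + ξ)`, `x ∼ N^d`, `ξ ∼ ν`. -/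
noncomputable def sampleMeasure (d m : ℕ) (f : (Fin d → ℝ) → ℝ) (ν : Measure ℝ) :
    Measure (Fin m → (Fin d → ℝ) × ℝ) :=
  Measure.pi fun _ =>
    Measure.map (fun p : (Fin d → ℝ) × ℝ => (p.1, f p.1 + p.2)) ((stdGaussian d).prod ν)

/-! ### Symmetrization and contraction for suprema of finite families -/

section Symmetrization

variable {T Z Z' : Type*} [MeasurableSpace Z] [MeasurableSpace Z']

lemma le_sup_fin [Finite T] (F : T → ℝ) (t : T) : F t ≤ ⨆ s, F s :=
  le_ciSup (Set.finite_range F).bddAbove t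

lemma integrable_sup [Fintype T] [Nonempty T] {μ : Measure Z} {F : T → Z → ℝ} (hF : ∀ t, Integrable (F t) μ) :
    Integrable (fun z => ⨆ t, F t z) μ := by
  have hm : AEStronglyMeasurable (fun z => ⨆ t, F t z) μ :=
    (AEMeasurable.iSup fun t => (hF t).aemeasurable).aestronglyMeasurable
  refine Integrable.mono' (integrable_finsetSum Finset.univ fun t _ => (hF t).abs) hm ?_
  refine Filter.Eventually.of_forall fun z => ?_
  obtain ⟨t, ht⟩ := exists_eq_ciSup_of_finite (f := fun t => F t z)
  rw [← ht, Real.norm_eq_abs]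
  exact Finset.single_le_sum (f := fun t => |F t z|) (fun _ _ => abs_nonneg _) (Finset.mem_univ t)

/-- Contraction principle for one random sign: averaging over the sign, a process `g` may be
replaced by any process `l` with larger increments. -/
lemma contraction_pointwise [Fintype T] [Nonempty T] (A g l : T → ℝ) (h : ∀ s t, |g s - g t| ≤ |l s - l t|) :
    (⨆ t, (A t + 2 * g t)) + (⨆ t, (A t - 2 * g t)) ≤
      (⨆ t, (A t + 2 * l t)) + (⨆ t, (A t - 2 * l t)) := by
  obtain ⟨s, hs⟩ := exists_eq_ciSup_of_finite (f := fun t => A t + 2 * g t)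
  obtain ⟨t, ht⟩ := exists_eq_ciSup_of_finite (f := fun t => A t - 2 * g t)
  rw [← hs, ← ht]
  have h1 := (le_abs_self _).trans (h s t)
  have a1 := le_sup_fin (fun t => A t + 2 * l t) s
  have a2 := le_sup_fin (fun t => A t + 2 * l t) t
  have b1 := le_sup_fin (fun t => A t - 2 * l t) s
  have b2 := le_sup_fin (fun t => A t - 2 * l t) t
  beta_reduce at a1 a2 b1 b2
  rcases abs_cases (l s - l t) with ⟨h2, _⟩ | ⟨h2, _⟩ <;> linarith

/-- Symmetrization of one centred summand in the presence of a fixed offset `A`. Averaging over an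
independent copy of the sample (Jensen) yields the terms `± 2 g`, which the contraction principle
replaces by `± 2 l`. -/
lemma symmetrization_step [Fintype T] [Nonempty T] (μ : Measure Z) [IsProbabilityMeasure μ] {g l : T → Z → ℝ}
    (hg : ∀ t, Integrable (g t) μ) (hl : ∀ t, Integrable (l t) μ)
    (h : ∀ s t z, |g s z - g t z| ≤ |l s z - l t z|) (A : T → ℝ) :
    ∫ z, (⨆ t, (A t + (g t z - ∫ x, g t x ∂μ))) ∂μ ≤
      ((∫ z, (⨆ t, (A t + 2 * l t z)) ∂μ) + ∫ z, (⨆ t, (A t - 2 * l t z)) ∂μ) / 2 := by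
  have ip : ∀ {f : T → Z → ℝ}, (∀ t, Integrable (f t) μ) →
      Integrable (fun z => ⨆ t, (A t + 2 * f t z)) μ := fun hf =>
    integrable_sup fun t => (integrable_const _).add ((hf t).const_mul 2)
  have im : ∀ {f : T → Z → ℝ}, (∀ t, Integrable (f t) μ) →
      Integrable (fun z => ⨆ t, (A t - 2 * f t z)) μ := fun hf =>
    integrable_sup fun t => (integrable_const _).sub ((hf t).const_mul 2)
  have h1 : ∫ z, (⨆ t, (A t + (g t z - ∫ x, g t x ∂μ))) ∂μ ≤
      ∫ z, ((⨆ t, (A t + 2 * g t z)) / 2 + (∫ x, (⨆ t, (A t - 2 * g t x)) ∂μ) / 2) ∂μ := by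
    refine integral_mono
      (integrable_sup fun t => (integrable_const _).add ((hg t).sub (integrable_const _)))
      (((ip hg).div_const 2).add (integrable_const _)) fun z => ?_
    refine ciSup_le fun t => ?_
    have h2 := le_sup_fin (fun t => A t + 2 * g t z) t
    have h3 : A t - 2 * ∫ x, g t x ∂μ ≤ ∫ x, (⨆ t, (A t - 2 * g t x)) ∂μ := by
      have : A t - 2 * ∫ x, g t x ∂μ = ∫ x, (A t - 2 * g t x) ∂μ := by
        rw [integral_sub (integrable_const _) ((hg t).const_mul 2), integral_const_mul]
        simp
      rw [this]
      exact integral_mono ((integrable_const _).sub ((hg t).const_mul 2)) (im hg)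
        fun x => le_sup_fin (fun t => A t - 2 * g t x) t
    beta_reduce at h2 ⊢
    linarith
  have h2 : (∫ z, (⨆ t, (A t + 2 * g t z)) ∂μ) + ∫ z, (⨆ t, (A t - 2 * g t z)) ∂μ ≤
      (∫ z, (⨆ t, (A t + 2 * l t z)) ∂μ) + ∫ z, (⨆ t, (A t - 2 * l t z)) ∂μ := by
    rw [← integral_add (ip hg) (im hg), ← integral_add (ip hl) (im hl)]
    exact integral_mono ((ip hg).add (im hg)) ((ip hl).add (im hl)) fun z =>
      contraction_pointwise A _ _ fun s t => h s t z
  rw [integral_add ((ip hg).div_const 2) (integrable_const _), integral_div] at h1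
  simp at h1
  linarith

lemma integrable_sum_pi {μ : Measure Z} [IsProbabilityMeasure μ] {G : Z → ℝ}
    (hG : Integrable G μ) (m : ℕ) :
    Integrable (fun z : Fin m → Z => ∑ j, G (z j)) (Measure.pi fun _ => μ) :=
  integrable_finsetSum _ fun j _ => integrable_comp_eval (μ := fun _ : Fin m => μ) (i := j) hG

lemma integral_sup_succ {μ : Measure Z} [IsProbabilityMeasure μ] (G : T → Z → ℝ)
    (A : T → ℝ) (m : ℕ) :
    ∫ z : Fin (m + 1) → Z, (⨆ t, (A t + ∑ j, G t (z j))) ∂(Measure.pi fun _ => μ) =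
      ∫ p : Z × (Fin m → Z), (⨆ t, ((A t + G t p.1) + ∑ j, G t (p.2 j)))
        ∂(μ.prod (Measure.pi fun _ => μ)) := by
  have := (measurePreserving_piFinSuccAbove (fun _ : Fin (m + 1) => μ) 0).integral_comp'
    (fun p : Z × (Fin m → Z) => ⨆ t, ((A t + G t p.1) + ∑ j, G t (p.2 j)))
  rw [← this]
  refine integral_congr_ae (Filter.Eventually.of_forall fun z => ?_)
  simp [MeasurableEquiv.piFinSuccAbove_apply, Fin.sum_univ_succ, add_assoc,
    Fin.insertNthEquiv, Fin.tail]

/-- If, for every offset `A`, the expected supremum does not decrease when one summand `G` is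
exchanged for `L`, then the `m` independent summands of a sum can be exchanged one at a time. The
arbitrary offset absorbs the summands that are held fixed. -/
lemma tensorize [Fintype T] [Nonempty T] {μ : Measure Z} [IsProbabilityMeasure μ] {κ : Measure Z'} [IsProbabilityMeasure κ]
    {G : T → Z → ℝ} {L : T → Z' → ℝ} (hG : ∀ t, Integrable (G t) μ)
    (hL : ∀ t, Integrable (L t) κ)
    (h : ∀ A : T → ℝ, ∫ z, (⨆ t, (A t + G t z)) ∂μ ≤ ∫ z, (⨆ t, (A t + L t z)) ∂κ) (m : ℕ) :
    ∀ A : T → ℝ,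
      ∫ z : Fin m → Z, (⨆ t, (A t + ∑ j, G t (z j))) ∂(Measure.pi fun _ => μ) ≤
        ∫ z : Fin m → Z', (⨆ t, (A t + ∑ j, L t (z j))) ∂(Measure.pi fun _ => κ) := by
  induction m with
  | zero => intro A; simp
  | succ m ih =>
    intro A
    rw [integral_sup_succ, integral_sup_succ]
    have i1 : Integrable (fun p : Z × (Fin m → Z) => ⨆ t, ((A t + G t p.1) + ∑ j, G t (p.2 j)))
        (μ.prod (Measure.pi fun _ => μ)) :=
      integrable_sup fun t => ((integrable_const _).add ((hG t).comp_fst _)).add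
        ((integrable_sum_pi (hG t) m).comp_snd _)
    have i2 : Integrable (fun p : Z × (Fin m → Z') => ⨆ t, ((A t + G t p.1) + ∑ j, L t (p.2 j)))
        (μ.prod (Measure.pi fun _ => κ)) :=
      integrable_sup fun t => ((integrable_const _).add ((hG t).comp_fst _)).add
        ((integrable_sum_pi (hL t) m).comp_snd _)
    have i3 : Integrable (fun p : Z' × (Fin m → Z') => ⨆ t, ((A t + L t p.1) + ∑ j, L t (p.2 j)))
        (κ.prod (Measure.pi fun _ => κ)) :=
      integrable_sup fun t => ((integrable_const _).add ((hL t).comp_fst _)).add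
        ((integrable_sum_pi (hL t) m).comp_snd _)
    calc _ ≤ ∫ p : Z × (Fin m → Z'), (⨆ t, ((A t + G t p.1) + ∑ j, L t (p.2 j)))
            ∂(μ.prod (Measure.pi fun _ => κ)) := by
          rw [integral_prod _ i1, integral_prod _ i2]
          exact integral_mono i1.integral_prod_left i2.integral_prod_left fun z =>
            ih fun t => A t + G t z
      _ ≤ _ := by
          rw [integral_prod_symm _ i2, integral_prod_symm _ i3]
          refine integral_mono i2.integral_prod_right i3.integral_prod_right fun z => ?_
          have := h (fun t => A t + ∑ j, L t (z j))
          simpa only [add_right_comm] using this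

end Symmetrization

/-! ### Expected uniform deviation of label-neuron correlations -/

section Concentration

/-- A single ReLU neuron `x ↦ max 0 ⟨w, x⟩`. -/
noncomputable def neuron {d : ℕ} (w x : Fin d → ℝ) : ℝ := max 0 (∑ j, w j * x j)

lemma measurable_neuron {d : ℕ} (w : Fin d → ℝ) : Measurable (neuron w) := by
  unfold neuron; fun_prop

/-- The law of `± V` with an independent uniform sign. -/
noncomputable def symLaw {Z : Type*} [MeasurableSpace Z] {d : ℕ} (μ : Measure Z)
    (V : Z → Fin d → ℝ) : Measure (Fin d → ℝ) :=
  (2⁻¹ : ENNReal) • (μ.map V + μ.map fun z => -V z)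

variable {Z : Type*} [MeasurableSpace Z] {d : ℕ} {μ : Measure Z}
  {V : Z → Fin d → ℝ}

lemma isProbabilityMeasure_symLaw [IsProbabilityMeasure μ] (hV : Measurable V) : IsProbabilityMeasure (symLaw μ V) := by
  refine ⟨?_⟩
  have h1 : (μ.map V) Set.univ = 1 := by
    rw [Measure.map_apply hV MeasurableSet.univ]; simp
  have h2 : (μ.map fun z => -V z) Set.univ = 1 := by
    have hVn : Measurable fun z => -V z := hV.neg
    rw [Measure.map_apply hVn MeasurableSet.univ]; simp
  simp only [symLaw, Measure.smul_apply, Measure.add_apply, h1, h2, smul_eq_mul]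
  rw [one_add_one_eq_two]
  exact ENNReal.inv_mul_cancel (by norm_num) (by norm_num)

lemma integrable_symLaw (hV : Measurable V) {F : (Fin d → ℝ) → ℝ} (hF : Measurable F)
    (h1 : Integrable (fun z => F (V z)) μ) (h2 : Integrable (fun z => F (-V z)) μ) :
    Integrable F (symLaw μ V) := by
  refine Integrable.smul_measure ?_ (by norm_num)
  exact ((integrable_map_measure hF.aestronglyMeasurable hV.aemeasurable).2 h1).add_measure
    ((integrable_map_measure hF.aestronglyMeasurable hV.neg.aemeasurable).2 h2)

lemma integral_symLaw (hV : Measurable V) {F : (Fin d → ℝ) → ℝ} (hF : Measurable F)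
    (h1 : Integrable (fun z => F (V z)) μ) (h2 : Integrable (fun z => F (-V z)) μ) :
    ∫ v, F v ∂(symLaw μ V) = ((∫ z, F (V z) ∂μ) + ∫ z, F (-V z) ∂μ) / 2 := by
  have hVn : Measurable fun z => -V z := hV.neg
  rw [symLaw, integral_smul_measure, integral_add_measure
    ((integrable_map_measure hF.aestronglyMeasurable hV.aemeasurable).2 h1)
    ((integrable_map_measure hF.aestronglyMeasurable hVn.aemeasurable).2 h2),
    integral_map hV.aemeasurable hF.aestronglyMeasurable,
    integral_map hVn.aemeasurable hF.aestronglyMeasurable]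
  simp
  ring

/-- The second moment of a sum of `m` i.i.d. centred variables is `m` times that of one. -/
lemma integral_sq_sum_pi {E : Type*} [MeasurableSpace E] {ρ : Measure E} [IsProbabilityMeasure ρ]
    {F : E → ℝ} (hF : MemLp F 2 ρ) (h0 : ∫ v, F v ∂ρ = 0) (m : ℕ) :
    ∫ v : Fin m → E, (∑ j, F (v j)) ^ 2 ∂(Measure.pi fun _ => ρ) = m * ∫ v, F v ^ 2 ∂ρ := by
  have h := variance_sum_pi (μ := fun _ : Fin m => ρ) (X := fun _ => F) fun _ => hF
  have hm : AEMeasurable (∑ j : Fin m, fun v : Fin m → E => F (v j)) (Measure.pi fun _ => ρ) := by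
    have := integrable_sum_pi (hF.integrable (by norm_num)) m
    convert this.aemeasurable using 1
    ext v; simp
  rw [variance_of_integral_eq_zero hm, variance_of_integral_eq_zero hF.aemeasurable h0] at h
  · simpa using h
  · simp only [Finset.sum_apply]
    rw [integral_finsetSum _ fun j _ => integrable_comp_eval (μ := fun _ : Fin m => ρ) (i := j)
      (hF.integrable (by norm_num))]
    refine Finset.sum_eq_zero fun j _ => ?_
    rw [integral_comp_eval (μ := fun _ : Fin m => ρ) (i := j) (f := F)
      hF.aestronglyMeasurable, h0]

/-- Bound for a linear process indexed by the unit ball: `2 ⟨W, v⟩ ≤ r ‖W‖² + ‖v‖² / r` reduces the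
supremum to the second moment of the norm of the sum. -/
lemma integral_sup_linear_le {ρ : Measure (Fin d → ℝ)} [IsProbabilityMeasure ρ]
    (hL : ∀ i, MemLp (fun v : Fin d → ℝ => v i) 2 ρ) (h0 : ∀ i, ∫ v, v i ∂ρ = 0)
    {B : ℝ} (hB : ∑ i, ∫ v, v i ^ 2 ∂ρ ≤ B) {T : Type*} [Fintype T] [Nonempty T]
    (W : T → Fin d → ℝ) (hW : ∀ t, ∑ i, W t i ^ 2 ≤ 1) {r : ℝ} (hr : 0 < r) (m : ℕ) :
    ∫ v : Fin m → Fin d → ℝ, (⨆ t, ((0 : ℝ) + ∑ j, 2 * ∑ i, W t i * v j i))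
      ∂(Measure.pi fun _ => ρ) ≤ r + m * B / r := by
  have i1 : ∀ i, Integrable (fun v : Fin d → ℝ => v i) ρ :=
    fun i => (hL i).integrable (by norm_num)
  have isq : ∀ i, Integrable (fun v : Fin m → Fin d → ℝ => (∑ j, v j i) ^ 2)
      (Measure.pi fun _ => ρ) := by
    intro i
    have : MemLp (fun v : Fin m → Fin d → ℝ => ∑ j, v j i) 2 (Measure.pi fun _ => ρ) := by
      refine memLp_finsetSum _ fun j _ => ?_
      exact (hL i).comp_measurePreserving (measurePreserving_eval (fun _ : Fin m => ρ) j)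
    exact this.integrable_sq
  have hle : ∫ v : Fin m → Fin d → ℝ, (⨆ t, ((0 : ℝ) + ∑ j, 2 * ∑ i, W t i * v j i))
      ∂(Measure.pi fun _ => ρ) ≤
      ∫ v : Fin m → Fin d → ℝ, (r + (∑ i, (∑ j, v j i) ^ 2) / r) ∂(Measure.pi fun _ => ρ) := by
    refine integral_mono (integrable_sup fun t => (integrable_const _).add ?_)
      ((integrable_const _).add ((integrable_finsetSum _ fun i _ => isq i).div_const _))
      fun v => ciSup_le fun t => ?_
    · exact integrable_sum_pi (G := fun v : Fin d → ℝ => 2 * ∑ i, W t i * v i)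
        ((integrable_finsetSum _ fun i _ => (i1 i).const_mul _).const_mul _) m
    · have e : (0 : ℝ) + ∑ j, 2 * ∑ i, W t i * v j i = ∑ i, 2 * (W t i * ∑ j, v j i) := by
        rw [zero_add, ← Finset.mul_sum, ← Finset.mul_sum, Finset.sum_comm]
        simp_rw [Finset.mul_sum]
      rw [e]
      calc ∑ i, 2 * (W t i * ∑ j, v j i) ≤ ∑ i, (r * W t i ^ 2 + (∑ j, v j i) ^ 2 / r) := by
            refine Finset.sum_le_sum fun i _ => ?_
            have : 0 ≤ (r * W t i - ∑ j, v j i) ^ 2 / r := by positivity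
            have e2 : (r * W t i - ∑ j, v j i) ^ 2 / r =
                r * W t i ^ 2 + (∑ j, v j i) ^ 2 / r - 2 * (W t i * ∑ j, v j i) := by
              field_simp; ring
            linarith
        _ ≤ _ := by
            rw [Finset.sum_add_distrib, ← Finset.mul_sum, Finset.sum_div]
            have := mul_le_mul_of_nonneg_left (hW t) hr.le
            linarith
  refine hle.trans ?_
  rw [integral_add (integrable_const _) ((integrable_finsetSum _ fun i _ => isq i).div_const _),
    integral_div, integral_finsetSum _ fun i _ => isq i]
  simp_rw [fun i => integral_sq_sum_pi (hL i) (h0 i) m, ← Finset.mul_sum]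
  simp only [integral_const, probReal_univ, one_smul]
  gcongr

variable {ν : Measure ((Fin d → ℝ) × ℝ)} [IsProbabilityMeasure ν]

lemma neuron_lip (w w' x : Fin d → ℝ) :
    |neuron w x - neuron w' x| ≤ |(∑ j, w j * x j) - ∑ j, w' j * x j| := by
  unfold neuron
  simpa using abs_max_sub_max_le_max 0 (∑ j, w j * x j) 0 (∑ j, w' j * x j)

lemma neuron_abs_le (w x : Fin d → ℝ) : |neuron w x| ≤ |∑ j, w j * x j| := by
  simpa [neuron] using neuron_lip w 0 x

lemma integrable_label_mul {i : Fin d} (hint : Integrable (fun z => (z.2 * z.1 i) ^ 2) ν) :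
    Integrable (fun z => z.2 * z.1 i) ν := by
  refine MemLp.integrable (q := 2) (by norm_num) ?_
  refine (memLp_two_iff_integrable_sq ?_).2 hint
  exact Measurable.aestronglyMeasurable (by fun_prop)

lemma integrable_label_linear (hint : ∀ i, Integrable (fun z => (z.2 * z.1 i) ^ 2) ν)
    (w : Fin d → ℝ) : Integrable (fun z => z.2 * ∑ j, w j * z.1 j) ν := by
  have : Integrable (fun z : (Fin d → ℝ) × ℝ => ∑ j, w j * (z.2 * z.1 j)) ν :=
    integrable_finsetSum _ fun i _ => (integrable_label_mul (hint i)).const_mul _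
  refine this.congr (Filter.Eventually.of_forall fun z => ?_)
  simp only [Finset.mul_sum]
  exact Finset.sum_congr rfl fun j _ => by ring

lemma integrable_label_neuron (hint : ∀ i, Integrable (fun z => (z.2 * z.1 i) ^ 2) ν)
    (w : Fin d → ℝ) : Integrable (fun z => z.2 * neuron w z.1) ν := by
  refine (integrable_label_linear hint w).mono ?_ (Filter.Eventually.of_forall fun z => ?_)
  · exact (measurable_snd.mul ((measurable_neuron w).comp measurable_fst)).aestronglyMeasurable
  · rw [Real.norm_eq_abs, Real.norm_eq_abs, abs_mul, abs_mul]
    exact mul_le_mul_of_nonneg_left (neuron_abs_le _ _) (abs_nonneg _)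

/-- Expected uniform deviation of the empirical correlations `y · neuron (W t) x`, with a sign
`s = ±1`. Since ReLU is 1-Lipschitz, the increments of `y · neuron w x` in `w` are dominated by those of
`y ⟨w, x⟩`, so symmetrization reduces to the linear process of `± y x` for a random sign. -/
lemma expected_sup_le (hint : ∀ i, Integrable (fun z => (z.2 * z.1 i) ^ 2) ν)
    {B : ℝ} (hB : ∑ i, ∫ z, (z.2 * z.1 i) ^ 2 ∂ν ≤ B) {T : Type*} [Fintype T] [Nonempty T]
    (W : T → Fin d → ℝ) (hW : ∀ t, ∑ i, W t i ^ 2 ≤ 1) {r : ℝ} (hr : 0 < r) (m : ℕ)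
    {s : ℝ} (hs : |s| = 1) :
    ∫ z : Fin m → (Fin d → ℝ) × ℝ, (⨆ t, ((0 : ℝ) + ∑ j, (s * ((z j).2 * neuron (W t) (z j).1)
        - ∫ z, s * (z.2 * neuron (W t) z.1) ∂ν))) ∂(Measure.pi fun _ => ν) ≤ r + m * B / r := by
  obtain ⟨V, hVdef⟩ : ∃ V : (Fin d → ℝ) × ℝ → Fin d → ℝ, ∀ z i, V z i = z.2 * z.1 i :=
    ⟨fun z i => z.2 * z.1 i, fun _ _ => rfl⟩
  have hV : Measurable V := by
    refine measurable_pi_lambda _ fun i => ?_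
    simp only [hVdef]; fun_prop
  have := isProbabilityMeasure_symLaw (μ := ν) hV
  have hL : ∀ i, MemLp (fun v : Fin d → ℝ => v i) 2 (symLaw ν V) := by
    intro i
    refine (memLp_two_iff_integrable_sq (Measurable.aestronglyMeasurable (by fun_prop))).2 ?_
    refine integrable_symLaw hV (by fun_prop) ?_ ?_ <;> simpa [hVdef] using hint i
  have h0 : ∀ i, ∫ v, v i ∂(symLaw ν V) = 0 := by
    intro i
    rw [integral_symLaw hV (F := fun v => v i) (by fun_prop) (by simpa [hVdef] using integrable_label_mul (hint i))
      (by simpa [hVdef] using (integrable_label_mul (hint i)).neg)]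
    simp [integral_neg]
  have hB' : ∑ i, ∫ v, v i ^ 2 ∂(symLaw ν V) ≤ B := by
    refine le_trans (le_of_eq (Finset.sum_congr rfl fun i _ => ?_)) hB
    rw [integral_symLaw hV (F := fun v => v i ^ 2) (by fun_prop) (by simpa [hVdef] using hint i)
      (by simpa [hVdef] using hint i)]
    simp [hVdef]
  have hlin := integral_sup_linear_le hL h0 hB' W hW hr m
  refine le_trans ?_ hlin
  have ig : ∀ t, Integrable (fun z => s * (z.2 * neuron (W t) z.1)) ν := fun t =>
    (integrable_label_neuron hint _).const_mul _
  have il : ∀ t, Integrable (fun z => z.2 * ∑ j, W t j * z.1 j) ν := fun t =>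
    integrable_label_linear hint _
  have iL : ∀ t, Integrable (fun v : Fin d → ℝ => 2 * ∑ i, W t i * v i) (symLaw ν V) := fun t =>
    (integrable_finsetSum _ fun i _ => ((hL i).integrable (by norm_num)).const_mul _).const_mul _
  have key := tensorize (μ := ν) (κ := symLaw ν V) (G := fun t z => s * (z.2 * neuron (W t) z.1)
        - ∫ z, s * (z.2 * neuron (W t) z.1) ∂ν) (L := fun t v => 2 * ∑ i, W t i * v i)
    (fun t => (ig t).sub (integrable_const _))
    iL ?_ m
  · exact key 0
  -- one exchanged summand: symmetrization, then the two signs are read as an integral over `symLaw`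
  intro A
  refine (symmetrization_step ν (l := fun t z => z.2 * ∑ j, W t j * z.1 j) ig il ?_ A).trans ?_
  · intro t t' z
    rw [← mul_sub, ← mul_sub, ← mul_sub, abs_mul, hs, one_mul, abs_mul, abs_mul]
    exact mul_le_mul_of_nonneg_left (neuron_lip _ _ _) (abs_nonneg _)
  · have e1 : ∀ t z, 2 * ∑ i, W t i * V z i = 2 * (z.2 * ∑ j, W t j * z.1 j) := by
      intro t z
      simp only [hVdef, Finset.mul_sum]
      exact Finset.sum_congr rfl fun j _ => by ring
    have e2 : ∀ t z, 2 * ∑ i, W t i * (-V z) i = -(2 * (z.2 * ∑ j, W t j * z.1 j)) := by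
      intro t z
      rw [← e1]
      simp [Finset.mul_sum]
    rw [integral_symLaw hV (F := fun v => ⨆ t, (A t + 2 * ∑ i, W t i * v i))]
    · simp only [e1, e2, ← sub_eq_add_neg]
      exact le_rfl
    · exact Measurable.iSup fun t => by fun_prop
    · simp only [e1]
      exact integrable_sup fun t => (integrable_const _).add ((il t).const_mul _)
    · simp only [e2]
      exact integrable_sup fun t => (integrable_const _).add ((il t).const_mul _).neg

end Concentration

/-! ### Uniform deviation with high probability -/

section Deviation

variable {d : ℕ} {ν : Measure ((Fin d → ℝ) × ℝ)} [IsProbabilityMeasure ν]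

/-- One-sided deviation bound, obtained from `expected_sup_le` by Markov's inequality. -/
lemma deviation_one_sided (hint : ∀ i, Integrable (fun z => (z.2 * z.1 i) ^ 2) ν)
    {M δ : ℝ} (hM : 0 < M) (hδ : 0 < δ) (hd : 1 ≤ d)
    (hB : ∑ i, ∫ z, (z.2 * z.1 i) ^ 2 ∂ν ≤ 8 * d * M ^ 2)
    {T : Type*} [Fintype T] [Nonempty T]
    (W : T → Fin d → ℝ) (hW : ∀ t, ∑ i, W t i ^ 2 ≤ 1) {t0 : T} (h0 : W t0 = 0) {m : ℕ}
    (hm : 12800 * d / δ ^ 2 ≤ m) {s : ℝ} (hs : |s| = 1) :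
    (Measure.pi fun _ : Fin m => ν).real {z | ∃ t, m * δ * M ≤
      s * ((∑ j, (z j).2 * neuron (W t) (z j).1) - m * ∫ z, z.2 * neuron (W t) z.1 ∂ν)}
      ≤ 1 / 20 := by
  have hd0 : (0 : ℝ) < d := by exact_mod_cast hd
  have hm0 : (0 : ℝ) < m := lt_of_lt_of_le (by positivity) hm
  obtain ⟨Φ, hΦ⟩ : ∃ Φ : T → (Fin m → (Fin d → ℝ) × ℝ) → ℝ, ∀ t z, Φ t z =
      (0 : ℝ) + ∑ j, (s * ((z j).2 * neuron (W t) (z j).1)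
        - ∫ z, s * (z.2 * neuron (W t) z.1) ∂ν) := ⟨_, fun _ _ => rfl⟩
  have hΦe : ∀ t z, Φ t z =
      s * ((∑ j, (z j).2 * neuron (W t) (z j).1) - m * ∫ z, z.2 * neuron (W t) z.1 ∂ν) := by
    intro t z
    simp only [hΦ, Finset.sum_sub_distrib, integral_const_mul, Finset.sum_const, Finset.card_univ,
      Fintype.card_fin, nsmul_eq_mul, ← Finset.mul_sum]
    ring
  -- with this `r`, both terms of the expectation bound are at most `m δ M / 40`
  have hr : 0 < m * δ * M / 40 := by positivity
  have hE := expected_sup_le hint hB W hW hr m hs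
  simp_rw [← hΦ] at hE
  have hΦi : ∀ t, Integrable (Φ t) (Measure.pi fun _ : Fin m => ν) := by
    intro t
    have := (integrable_const (0 : ℝ)).add (integrable_sum_pi (G := fun z : (Fin d → ℝ) × ℝ => s * (z.2 * neuron (W t) z.1)
        - ∫ z, s * (z.2 * neuron (W t) z.1) ∂ν)
      (((integrable_label_neuron hint _).const_mul _).sub (integrable_const _)) m)
    exact this.congr (Filter.Eventually.of_forall fun z => (hΦ t z).symm)
  -- the zero direction `t0` makes the supremum nonnegative, as Markov's inequality requires
  have hnn : ∀ z, 0 ≤ ⨆ t, Φ t z := by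
    intro z
    refine le_trans (le_of_eq ?_) (le_sup_fin (fun t => Φ t z) t0)
    simp [hΦ, h0, neuron]
  have hmk := mul_meas_ge_le_integral_of_nonneg (Filter.Eventually.of_forall hnn)
    (integrable_sup hΦi) (m * δ * M)
  have hsub : {z | ∃ t, m * δ * M ≤
      s * ((∑ j, (z j).2 * neuron (W t) (z j).1) - m * ∫ z, z.2 * neuron (W t) z.1 ∂ν)} ⊆
      {z | m * δ * M ≤ ⨆ t, Φ t z} := by
    rintro z ⟨t, ht⟩
    rw [← hΦe] at ht
    exact ht.trans (le_sup_fin (fun t => Φ t z) t)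
  refine (measureReal_mono hsub).trans ?_
  have h1 : m * δ * M * (Measure.pi fun _ : Fin m => ν).real {z | m * δ * M ≤ ⨆ t, Φ t z} ≤ m * δ * M * (1 / 20) := by
    refine (hmk.trans hE).trans ?_
    have e : m * δ * M / 40 + m * (8 * d * M ^ 2) / (m * δ * M / 40) =
        m * δ * M * (1 / 40) + 320 * d * M / δ := by
      field_simp; ring
    rw [e]
    have h2 : 12800 * d ≤ m * δ ^ 2 := by
      rwa [div_le_iff₀ (by positivity)] at hm
    have h3 : 320 * d * M / δ ≤ m * δ * M * (1 / 40) := by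
      rw [div_le_iff₀ hδ]
      nlinarith
    linarith
  exact le_of_mul_le_mul_left h1 (by positivity)

lemma deviation_finite (hint : ∀ i, Integrable (fun z => (z.2 * z.1 i) ^ 2) ν)
    {M δ : ℝ} (hM : 0 < M) (hδ : 0 < δ) (hd : 1 ≤ d)
    (hB : ∑ i, ∫ z, (z.2 * z.1 i) ^ 2 ∂ν ≤ 8 * d * M ^ 2)
    {T : Type*} [Fintype T] [Nonempty T]
    (W : T → Fin d → ℝ) (hW : ∀ t, ∑ i, W t i ^ 2 ≤ 1) {t0 : T} (h0 : W t0 = 0) {m : ℕ}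
    (hm : 12800 * d / δ ^ 2 ≤ m) :
    (Measure.pi fun _ : Fin m => ν) {z | ∃ t, m * δ * M ≤
      |(∑ j, (z j).2 * neuron (W t) (z j).1) - m * ∫ z, z.2 * neuron (W t) z.1 ∂ν|}
      ≤ ENNReal.ofReal (1 / 10) := by
  have hp := deviation_one_sided hint hM hδ hd hB W hW h0 hm (s := 1) (by simp)
  have hn := deviation_one_sided hint hM hδ hd hB W hW h0 hm (s := -1) (by simp)
  rw [← ofReal_measureReal]
  refine ENNReal.ofReal_le_ofReal ?_
  refine (measureReal_mono (s₂ := _ ∪ _) ?_ (measure_ne_top _ _)).trans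
    ((measureReal_union_le _ _).trans ((add_le_add hp hn).trans (by norm_num)))
  rintro z ⟨t, ht⟩
  rcases le_abs'.1 ht with h | h
  · exact Or.inr ⟨t, by linarith⟩
  · exact Or.inl ⟨t, by linarith⟩

/-- The deviation bound does not depend on the number of test directions, so it passes to a countable
family by continuity from below. -/
lemma deviation_seq (hint : ∀ i, Integrable (fun z => (z.2 * z.1 i) ^ 2) ν)
    {M δ : ℝ} (hM : 0 < M) (hδ : 0 < δ) (hd : 1 ≤ d)
    (hB : ∑ i, ∫ z, (z.2 * z.1 i) ^ 2 ∂ν ≤ 8 * d * M ^ 2)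
    (W : ℕ → Fin d → ℝ) (hW : ∀ n, ∑ i, W n i ^ 2 ≤ 1) (h0 : W 0 = 0) {m : ℕ}
    (hm : 12800 * d / δ ^ 2 ≤ m) :
    (Measure.pi fun _ : Fin m => ν) {z | ∃ n, m * δ * M ≤
      |(∑ j, (z j).2 * neuron (W n) (z j).1) - m * ∫ z, z.2 * neuron (W n) z.1 ∂ν|}
      ≤ ENNReal.ofReal (1 / 10) := by
  set S : ℕ → Set (Fin m → (Fin d → ℝ) × ℝ) := fun n => {z | m * δ * M ≤
      |(∑ j, (z j).2 * neuron (W n) (z j).1) - m * ∫ z, z.2 * neuron (W n) z.1 ∂ν|} with hS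
  have e : {z | ∃ n, m * δ * M ≤
      |(∑ j, (z j).2 * neuron (W n) (z j).1) - m * ∫ z, z.2 * neuron (W n) z.1 ∂ν|} =
      ⋃ N, {z | ∃ n : Fin (N + 1), z ∈ S n} := by
    ext z
    simp only [Set.mem_ofPred_eq, Set.mem_iUnion]
    exact ⟨fun ⟨n, h⟩ => ⟨n, Fin.last n, by simpa [hS] using h⟩, fun ⟨_, n, h⟩ => ⟨n, h⟩⟩
  rw [e, Monotone.measure_iUnion]
  · refine iSup_le fun N => ?_
    exact deviation_finite hint hM hδ hd hB (fun n : Fin (N + 1) => W n) (fun n => hW n)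
      (t0 := 0) (by simpa using h0) hm
  · rintro a b hab z ⟨n, h⟩
    exact ⟨⟨n, by omega⟩, h⟩

end Deviation

/-! ### Gaussian moments of linear forms and of neurons -/

section Gaussian

variable {d : ℕ}

instance : IsProbabilityMeasure (_root_.stdGaussian d) := by
  unfold _root_.stdGaussian; infer_instance

lemma memLp_coord (i : Fin d) {p : ENNReal} (hp : p ≠ ⊤) :
    MemLp (fun x : Fin d → ℝ => x i) p (_root_.stdGaussian d) :=
  (memLp_id_gaussianReal' p hp).comp_measurePreserving
    (measurePreserving_eval (fun _ : Fin d => gaussianReal 0 1) i)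

lemma memLp_linear (w : Fin d → ℝ) {p : ENNReal} (hp : p ≠ ⊤) :
    MemLp (fun x : Fin d → ℝ => ∑ j, w j * x j) p (_root_.stdGaussian d) :=
  memLp_finsetSum _ fun j _ => (memLp_coord j hp).const_mul _

lemma memLp_neuron (w : Fin d → ℝ) {p : ENNReal} (hp : p ≠ ⊤) :
    MemLp (neuron w) p (_root_.stdGaussian d) :=
  (memLp_linear w hp).mono (measurable_neuron w).aestronglyMeasurable
    (Filter.Eventually.of_forall fun x => neuron_abs_le w x)

lemma integrable_linear_pow (w : Fin d → ℝ) (n : ℕ) :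
    Integrable (fun x : Fin d → ℝ => (∑ j, w j * x j) ^ n) (_root_.stdGaussian d) := by
  have h := (memLp_linear w (p := n) (by simp)).integrable_norm_pow'
  refine h.mono (Measurable.aestronglyMeasurable (by fun_prop))
    (Filter.Eventually.of_forall fun x => by simp)

lemma integral_coord (i : Fin d) : ∫ x : Fin d → ℝ, x i ∂(_root_.stdGaussian d) = 0 := by
  have := integral_comp_eval (μ := fun _ : Fin d => gaussianReal 0 1) (i := i) (f := fun t => t)
    (by fun_prop)
  unfold _root_.stdGaussian
  rw [this]; simp

lemma integral_linear (w : Fin d → ℝ) :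
    ∫ x : Fin d → ℝ, ∑ j, w j * x j ∂(_root_.stdGaussian d) = 0 := by
  rw [integral_finsetSum _ fun j _ =>
    ((memLp_coord j (p := 1) (by simp)).integrable le_rfl).const_mul _]
  simp [integral_const_mul, integral_coord]

lemma integral_linear_sq (w : Fin d → ℝ) :
    ∫ x : Fin d → ℝ, (∑ j, w j * x j) ^ 2 ∂(_root_.stdGaussian d) = ∑ j, w j ^ 2 := by
  have h := variance_sum_pi (μ := fun _ : Fin d => gaussianReal 0 1)
    (X := fun j t => w j * t) fun j => (memLp_id_gaussianReal' 2 (by simp)).const_mul _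
  have e : (∑ j, fun x : Fin d → ℝ => w j * x j) = fun x => ∑ j, w j * x j := by
    ext x; simp
  change Var[∑ j, fun x : Fin d → ℝ => w j * x j; _root_.stdGaussian d] = _ at h
  rw [e, variance_of_integral_eq_zero (Measurable.aemeasurable (by fun_prop)) (integral_linear w)] at h
  refine h.trans (Finset.sum_congr rfl fun j _ => ?_)
  rw [variance_const_mul, variance_fun_id_gaussianReal]
  simp

lemma mgf_linear (w : Fin d → ℝ) :
    Integrable (fun x : Fin d → ℝ => Real.exp (∑ j, w j * x j)) (_root_.stdGaussian d) ∧
    ∫ x : Fin d → ℝ, Real.exp (∑ j, w j * x j) ∂(_root_.stdGaussian d) =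
      Real.exp ((∑ j, w j ^ 2) / 2) := by
  simp_rw [Real.exp_sum]
  constructor
  · exact Integrable.fintype_prod (f := fun j t => Real.exp (w j * t)) fun j =>
      integrable_exp_mul_gaussianReal (w j)
  · unfold _root_.stdGaussian
    rw [integral_fintype_prod_eq_prod (fun j t => Real.exp (w j * t)), Finset.sum_div,
      Real.exp_sum]
    refine Finset.prod_congr rfl fun j _ => ?_
    have := congrFun (mgf_fun_id_gaussianReal (μ := 0) (v := 1)) (w j)
    simpa [mgf] using this

lemma exp_add_exp_neg_ge (t : ℝ) : 2 + t ^ 2 + t ^ 4 / 12 ≤ Real.exp t + Real.exp (-t) := by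
  have h := sum_le_hasSum (Finset.range 3) (fun n _ => by
    rw [pow_mul]; positivity) (Real.hasSum_cosh t)
  rw [Real.cosh_eq] at h
  simp [Finset.sum_range_succ, Nat.factorial] at h
  linarith

/-- A crude fourth moment bound (the exact value is `3`), read off from the moment generating function
at `±1` and `2 + t² + t⁴ / 12 ≤ exp t + exp (-t)`. -/
lemma integral_linear_pow_four {w : Fin d → ℝ} (hw : ∑ j, w j ^ 2 = 1) :
    ∫ x : Fin d → ℝ, (∑ j, w j * x j) ^ 4 ∂(_root_.stdGaussian d) ≤ 4 := by
  obtain ⟨i1, e1⟩ := mgf_linear w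
  obtain ⟨i2, e2⟩ := mgf_linear (-w)
  simp only [Pi.neg_apply, neg_mul, Finset.sum_neg_distrib, neg_sq] at i2 e2
  have i3 : Integrable (fun x : Fin d → ℝ => 2 + (∑ j, w j * x j) ^ 2) (_root_.stdGaussian d) :=
    (integrable_const (2 : ℝ)).add (integrable_linear_pow w 2)
  have h := integral_mono (i3.add
    ((integrable_linear_pow w 4).div_const 12)) (i1.add i2)
    (fun x => exp_add_exp_neg_ge (∑ j, w j * x j))
  simp only [Pi.add_apply] at h
  rw [integral_add i1 i2, e1, e2, integral_add i3 ((integrable_linear_pow w 4).div_const 12),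
    integral_add (integrable_const (2 : ℝ)) (integrable_linear_pow w 2), integral_linear_sq,
    integral_div, hw] at h
  simp only [integral_const, probReal_univ, one_smul] at h
  have h5 : Real.exp (1 / 2) ≤ 5 / 3 := by
    have h6 : Real.exp (1 / 2) ^ 2 = Real.exp 1 := by
      rw [← Real.exp_nat_mul]; norm_num
    have h7 := Real.exp_one_lt_d9
    have h8 := Real.exp_pos (1 / 2)
    nlinarith
  linarith

/-- The mean of a unit neuron is bounded below, by comparing ReLU with the polynomial
`t / 2 + t² / 2 - (2 / 27) t⁴`, which lies below it and whose mean is known up to the fourth moment. -/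
lemma integral_neuron_ge {w : Fin d → ℝ} (hw : ∑ j, w j ^ 2 = 1) :
    1 / 5 ≤ ∫ x, neuron w x ∂(_root_.stdGaussian d) := by
  have hpt : ∀ t : ℝ, t / 2 + t ^ 2 / 2 - t ^ 4 * (2 / 27) ≤ max 0 t := by
    have key : ∀ u : ℝ, 0 ≤ u → u ^ 2 - 4 / 27 * u ^ 4 ≤ u := by
      intro u hu
      -- `27 u - 27 u² + 4 u⁴ = u (2 u - 3)² (u + 3)`
      nlinarith [mul_nonneg hu (mul_nonneg (sq_nonneg (2 * u - 3)) (by linarith : 0 ≤ u + 3))]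
    intro t
    rcases le_total 0 t with h | h
    · rw [max_eq_right h]; linarith [key t h]
    · rw [max_eq_left h]
      have := key (-t) (by linarith)
      rw [neg_sq, Even.neg_pow (by decide)] at this
      linarith
  have i1 := (integrable_linear_pow w 1).div_const 2
  have i2 := (integrable_linear_pow w 2).div_const 2
  have i4 := (integrable_linear_pow w 4).mul_const (2 / 27)
  simp only [pow_one] at i1
  have i12 : Integrable (fun x : Fin d → ℝ => (∑ j, w j * x j) / 2 + (∑ j, w j * x j) ^ 2 / 2)
    (_root_.stdGaussian d) := i1.add i2
  have h := integral_mono (i12.sub i4)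
    ((memLp_neuron w (p := 1) (by simp)).integrable le_rfl) fun x => hpt (∑ j, w j * x j)
  simp only [Pi.sub_apply] at h
  rw [integral_sub i12 i4, integral_add i1 i2, integral_div, integral_div,
    integral_mul_const, integral_linear, integral_linear_sq, hw] at h
  have := integral_linear_pow_four hw
  linarith

lemma integral_neuron_le {w : Fin d → ℝ} (hw : ∑ j, w j ^ 2 ≤ 1) :
    ∫ x, neuron w x ∂(_root_.stdGaussian d) ≤ 1 := by
  have hpt : ∀ t : ℝ, max 0 t ≤ (1 + t ^ 2) / 2 := fun t =>
    max_le (by positivity) (by nlinarith [sq_nonneg (t - 1)])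
  have h := integral_mono ((memLp_neuron w (p := 1) (by simp)).integrable le_rfl)
    (((integrable_const (1 : ℝ)).add (integrable_linear_pow w 2)).div_const 2)
    fun x => hpt (∑ j, w j * x j)
  simp only [Pi.add_apply] at h
  rw [integral_div, integral_add (integrable_const (1 : ℝ)) (integrable_linear_pow w 2),
    integral_linear_sq] at h
  simp only [integral_const, probReal_univ, one_smul] at h
  linarith

end Gaussian

/-! ### Moments of a labelled sample -/

section SampleLaw

/-- Second moment of subgaussian noise, from `l² t² ≤ exp (l t) + exp (-l t) - 2` with
`l = 1 / σ`; the case `σ = 0` is separate. -/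
lemma subgaussian_sq {ν : Measure ℝ} {σ : ℝ} (h : IsZeroMeanSubgaussian ν σ) (hσ : 0 ≤ σ) :
    Integrable (fun t => t ^ 2) ν ∧ ∫ t, t ^ 2 ∂ν ≤ 2 * σ ^ 2 := by
  obtain ⟨hp, -, hexp⟩ := h
  have hpt : ∀ l t : ℝ, l ^ 2 * t ^ 2 ≤ Real.exp (l * t) + Real.exp (-l * t) - 2 := by
    intro l t
    have h1 := exp_add_exp_neg_ge (l * t)
    have h2 : 0 ≤ (l * t) ^ 4 / 12 := by positivity
    rw [neg_mul]
    nlinarith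
  have hdom : ∀ l : ℝ, Integrable (fun t => Real.exp (l * t) + Real.exp (-l * t) - 2) ν := fun l =>
    ((hexp l).1.add (hexp (-l)).1).sub (integrable_const _)
  have hi : Integrable (fun t : ℝ => t ^ 2) ν := by
    refine (hdom 1).mono' (by fun_prop) (Filter.Eventually.of_forall fun t => ?_)
    rw [Real.norm_eq_abs, abs_of_nonneg (sq_nonneg t)]
    simpa using hpt 1 t
  refine ⟨hi, ?_⟩
  have hl : ∀ l : ℝ, l ^ 2 * ∫ t, t ^ 2 ∂ν ≤ 2 * Real.exp (l ^ 2 * σ ^ 2 / 2) - 2 := by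
    intro l
    have h1 := integral_mono (hi.const_mul (l ^ 2)) (hdom l) (hpt l)
    have i2 : Integrable (fun t => Real.exp (l * t) + Real.exp (-l * t)) ν :=
      (hexp l).1.add (hexp (-l)).1
    rw [integral_const_mul, integral_sub i2 (integrable_const _),
      integral_add (hexp l).1 (hexp (-l)).1] at h1
    have h2 := (hexp l).2
    have h3 := (hexp (-l)).2
    rw [neg_sq] at h3
    simp only [integral_const, probReal_univ, one_smul] at h1
    linarith
  rcases hσ.eq_or_lt with rfl | hσ
  · simpa using hl 1
  · have h1 := hl σ⁻¹
    have e : σ⁻¹ ^ 2 * σ ^ 2 / 2 = 1 / 2 := by field_simp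
    rw [e] at h1
    have h5 : Real.exp (1 / 2) ≤ 2 := by
      have h6 : Real.exp (1 / 2) ^ 2 = Real.exp 1 := by
        rw [← Real.exp_nat_mul]; norm_num
      have h7 := Real.exp_one_lt_d9
      have h8 := Real.exp_pos (1 / 2)
      nlinarith
    have h9 : σ⁻¹ ^ 2 * ∫ t, t ^ 2 ∂ν ≤ 2 := by linarith
    calc ∫ t, t ^ 2 ∂ν = σ ^ 2 * (σ⁻¹ ^ 2 * ∫ t, t ^ 2 ∂ν) := by field_simp
      _ ≤ σ ^ 2 * 2 := by gcongr
      _ = _ := by ring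

variable {d k : ℕ} {α : Fin k → ℝ} {w : Fin k → Fin d → ℝ}

lemma reluNet_eq (α : Fin k → ℝ) (w : Fin k → Fin d → ℝ) (x : Fin d → ℝ) :
    reluNet α w x = ∑ i, α i * neuron (w i) x := rfl

lemma measurable_reluNet (α : Fin k → ℝ) (w : Fin k → Fin d → ℝ) : Measurable (reluNet α w) := by
  unfold reluNet; fun_prop

lemma memLp_reluNet (α : Fin k → ℝ) (w : Fin k → Fin d → ℝ) {p : ENNReal} (hp : p ≠ ⊤) :
    MemLp (reluNet α w) p (_root_.stdGaussian d) :=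
  memLp_finsetSum _ fun i _ => (memLp_neuron (w i) hp).const_mul _

lemma coord_pow_four (i : Fin d) : Integrable (fun x : Fin d → ℝ => x i ^ 4)
    (_root_.stdGaussian d) ∧ ∫ x : Fin d → ℝ, x i ^ 4 ∂(_root_.stdGaussian d) ≤ 4 := by
  have h1 := integrable_linear_pow (Pi.single i (1 : ℝ)) 4
  have h2 := integral_linear_pow_four (w := Pi.single i (1 : ℝ)) (by
    simp [Pi.single_apply])
  simp only [Pi.single_apply, ite_mul, one_mul, zero_mul, Finset.sum_ite_eq', Finset.mem_univ,
    if_true] at h1 h2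
  exact ⟨h1, h2⟩

lemma signal_coord_sq (hα : ∀ i, 0 < α i) (hw : ∀ i, ∑ j, w i j ^ 2 = 1) (i : Fin d) :
    Integrable (fun x : Fin d → ℝ => (reluNet α w x * x i) ^ 2) (_root_.stdGaussian d) ∧
    ∫ x : Fin d → ℝ, (reluNet α w x * x i) ^ 2 ∂(_root_.stdGaussian d) ≤ 4 * (∑ i, α i) ^ 2 := by
  have hS : 0 ≤ ∑ i, α i := Finset.sum_nonneg fun i _ => (hα i).le
  have hpt : ∀ x : Fin d → ℝ, (reluNet α w x * x i) ^ 2 ≤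
      (∑ k, α k) * ∑ k, α k * (((∑ j, w k j * x j) ^ 4 + x i ^ 4) / 2) := by
    intro x
    have h1 : reluNet α w x ^ 2 ≤ (∑ k, α k) * ∑ k, α k * neuron (w k) x ^ 2 := by
      rw [reluNet_eq]
      refine Finset.sum_sq_le_sum_mul_sum_of_sq_le_mul _ (fun k _ => (hα k).le)
        (fun k _ => mul_nonneg (hα k).le (sq_nonneg _)) fun k _ => le_of_eq (by ring)
    rw [mul_pow]
    refine (mul_le_mul_of_nonneg_right h1 (sq_nonneg _)).trans ?_
    rw [mul_assoc]
    refine mul_le_mul_of_nonneg_left ?_ hS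
    rw [Finset.sum_mul]
    refine Finset.sum_le_sum fun k _ => ?_
    rw [mul_assoc]
    refine mul_le_mul_of_nonneg_left ?_ (hα k).le
    have h2 : neuron (w k) x ^ 2 ≤ (∑ j, w k j * x j) ^ 2 := sq_le_sq.2 (neuron_abs_le _ _)
    nlinarith [sq_nonneg ((∑ j, w k j * x j) ^ 2 - x i ^ 2),
      mul_le_mul_of_nonneg_right h2 (sq_nonneg (x i))]
  have ik : ∀ k, Integrable (fun x : Fin d → ℝ =>
      α k * (((∑ j, w k j * x j) ^ 4 + x i ^ 4) / 2)) (_root_.stdGaussian d) := fun k =>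
    (((integrable_linear_pow (w k) 4).add (coord_pow_four i).1).div_const 2).const_mul _
  have idom := (integrable_finsetSum Finset.univ fun k _ => ik k).const_mul (∑ k, α k)
  have hi : Integrable (fun x : Fin d → ℝ => (reluNet α w x * x i) ^ 2)
      (_root_.stdGaussian d) := by
    refine idom.mono' ?_ (Filter.Eventually.of_forall fun x => ?_)
    · exact (((measurable_reluNet α w).mul (measurable_pi_apply i)).pow_const 2).aestronglyMeasurable
    · rw [Real.norm_eq_abs, abs_of_nonneg (sq_nonneg _)]
      exact hpt x
  refine ⟨hi, (integral_mono hi idom hpt).trans ?_⟩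
  rw [integral_const_mul, integral_finsetSum _ fun k _ => ik k]
  have h4 : ∀ k, ∫ x : Fin d → ℝ, α k * (((∑ j, w k j * x j) ^ 4 + x i ^ 4) / 2)
      ∂(_root_.stdGaussian d) ≤ α k * 4 := by
    intro k
    rw [integral_const_mul, integral_div,
      integral_add (integrable_linear_pow (w k) 4) (coord_pow_four i).1]
    refine mul_le_mul_of_nonneg_left ?_ (hα k).le
    linarith [integral_linear_pow_four (hw k), (coord_pow_four i).2]
  calc (∑ k, α k) * _ ≤ (∑ k, α k) * ∑ k, α k * 4 :=
        mul_le_mul_of_nonneg_left (Finset.sum_le_sum fun k _ => h4 k) hS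
    _ = _ := by rw [← Finset.sum_mul]; ring

/-- The law of one labelled sample `(x, f x + ξ)`. -/
noncomputable def sampleLaw (d : ℕ) (f : (Fin d → ℝ) → ℝ) (ν : Measure ℝ) :
    Measure ((Fin d → ℝ) × ℝ) :=
  Measure.map (fun p : (Fin d → ℝ) × ℝ => (p.1, f p.1 + p.2)) ((_root_.stdGaussian d).prod ν)

variable {ν : Measure ℝ} {σ : ℝ}

lemma measurable_sampleMap (α : Fin k → ℝ) (w : Fin k → Fin d → ℝ) :
    Measurable fun p : (Fin d → ℝ) × ℝ => (p.1, reluNet α w p.1 + p.2) :=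
  measurable_fst.prodMk (((measurable_reluNet α w).comp measurable_fst).add measurable_snd)

lemma isProbabilityMeasure_sampleLaw (α : Fin k → ℝ) (w : Fin k → Fin d → ℝ)
    (h : IsZeroMeanSubgaussian ν σ) : IsProbabilityMeasure (sampleLaw d (reluNet α w) ν) := by
  have := h.1
  exact Measure.isProbabilityMeasure_map (measurable_sampleMap α w).aemeasurable

lemma sampleLaw_second_moment (hα : ∀ i, 0 < α i) (hw : ∀ i, ∑ j, w i j ^ 2 = 1)
    (h : IsZeroMeanSubgaussian ν σ) (hσ : 0 ≤ σ) (i : Fin d) :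
    Integrable (fun z => (z.2 * z.1 i) ^ 2) (sampleLaw d (reluNet α w) ν) ∧
    ∫ z, (z.2 * z.1 i) ^ 2 ∂(sampleLaw d (reluNet α w) ν) ≤ 8 * (σ + ∑ i, α i) ^ 2 := by
  have := h.1
  have hS : 0 ≤ ∑ i, α i := Finset.sum_nonneg fun i _ => (hα i).le
  obtain ⟨f1, f2⟩ := signal_coord_sq hα hw i
  obtain ⟨n1, n2⟩ := subgaussian_sq h hσ
  have c1 : Integrable (fun x : Fin d → ℝ => x i ^ 2) (_root_.stdGaussian d) :=
    (memLp_coord i (p := 2) (by simp)).integrable_sq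
  have c2 : ∫ x : Fin d → ℝ, x i ^ 2 ∂(_root_.stdGaussian d) = 1 := by
    have := integral_linear_sq (Pi.single i (1 : ℝ))
    simpa [Pi.single_apply] using this
  have hsm : Measurable fun z : (Fin d → ℝ) × ℝ => (z.2 * z.1 i) ^ 2 := by fun_prop
  have hmm := measurable_sampleMap α w
  have i1 : Integrable (fun p : (Fin d → ℝ) × ℝ => 2 * (reluNet α w p.1 * p.1 i) ^ 2)
      ((_root_.stdGaussian d).prod ν) := (f1.comp_fst ν).const_mul 2
  have i2 : Integrable (fun p : (Fin d → ℝ) × ℝ => 2 * (p.1 i ^ 2 * p.2 ^ 2))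
      ((_root_.stdGaussian d).prod ν) := (c1.mul_prod n1).const_mul 2
  have hpt : ∀ p : (Fin d → ℝ) × ℝ, ((reluNet α w p.1 + p.2) * p.1 i) ^ 2 ≤
      2 * (reluNet α w p.1 * p.1 i) ^ 2 + 2 * (p.1 i ^ 2 * p.2 ^ 2) := fun p => by
    nlinarith [sq_nonneg (reluNet α w p.1 * p.1 i - p.2 * p.1 i)]
  have hi : Integrable (fun p : (Fin d → ℝ) × ℝ => ((reluNet α w p.1 + p.2) * p.1 i) ^ 2)
      ((_root_.stdGaussian d).prod ν) := by
    refine (i1.add i2).mono' (hsm.comp hmm).aestronglyMeasurable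
      (Filter.Eventually.of_forall fun p => ?_)
    rw [Real.norm_eq_abs, abs_of_nonneg (sq_nonneg _)]
    exact hpt p
  unfold sampleLaw
  refine ⟨(integrable_map_measure hsm.aestronglyMeasurable hmm.aemeasurable).2 hi, ?_⟩
  rw [integral_map hmm.aemeasurable hsm.aestronglyMeasurable]
  refine (integral_mono hi (i1.add i2) hpt).trans ?_
  rw [integral_add' i1 i2, integral_const_mul, integral_const_mul,
    integral_prod_mul (fun x : Fin d → ℝ => x i ^ 2) (fun t : ℝ => t ^ 2), c2,
    integral_fun_fst (fun x => (reluNet α w x * x i) ^ 2)]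
  simp only [probReal_univ, one_smul]
  nlinarith [mul_nonneg hσ hS]

/-- The noise is centred and independent of `x`, so it does not contribute to correlations. -/
lemma sampleLaw_correlation (h : IsZeroMeanSubgaussian ν σ) (hσ : 0 ≤ σ) (u : Fin d → ℝ) :
    ∫ z, z.2 * neuron u z.1 ∂(sampleLaw d (reluNet α w) ν) =
      ∫ x, reluNet α w x * neuron u x ∂(_root_.stdGaussian d) := by
  have := h.1
  have hmm := measurable_sampleMap α w
  have hsm : Measurable fun z : (Fin d → ℝ) × ℝ => z.2 * neuron u z.1 :=
    measurable_snd.mul ((measurable_neuron u).comp measurable_fst)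
  have n0 : Integrable (fun t : ℝ => t) ν :=
    MemLp.integrable (q := 2) (by norm_num)
      ((memLp_two_iff_integrable_sq (by fun_prop)).2 (subgaussian_sq h hσ).1)
  have i1 : Integrable (fun x => reluNet α w x * neuron u x) (_root_.stdGaussian d) :=
    (memLp_reluNet α w (p := 2) (by simp)).integrable_mul (memLp_neuron u (p := 2) (by simp))
  have i2 : Integrable (fun p : (Fin d → ℝ) × ℝ => neuron u p.1 * p.2)
      ((_root_.stdGaussian d).prod ν) :=
    ((memLp_neuron u (p := 1) (by simp)).integrable le_rfl).mul_prod n0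
  unfold sampleLaw
  rw [integral_map hmm.aemeasurable hsm.aestronglyMeasurable]
  have e : ∀ p : (Fin d → ℝ) × ℝ, (reluNet α w p.1 + p.2) * neuron u p.1 =
      reluNet α w p.1 * neuron u p.1 + neuron u p.1 * p.2 := fun p => by ring
  simp only [e]
  rw [integral_add (i1.comp_fst ν) i2, integral_prod_mul (neuron u) (fun t : ℝ => t), h.2.1,
    integral_fun_fst (fun x => reluNet α w x * neuron u x)]
  simp

end SampleLaw

/-! ### From uniformly small correlations to small risk -/

section Deterministic

variable {d k : ℕ}

lemma abs_linear_le (u x : Fin d → ℝ) :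
    |∑ j, u j * x j| ≤ (∑ j, |u j|) * ∑ j, |x j| := by
  refine (Finset.abs_sum_le_sum_abs _ _).trans ?_
  rw [Finset.sum_mul]
  refine Finset.sum_le_sum fun j _ => ?_
  rw [abs_mul]
  exact mul_le_mul_of_nonneg_left
    (Finset.single_le_sum (f := fun j => |x j|) (fun _ _ => abs_nonneg _) (Finset.mem_univ j))
    (abs_nonneg _)

lemma abs_neuron_sub_le (u u' x : Fin d → ℝ) :
    |neuron u x - neuron u' x| ≤ (∑ j, |u j - u' j|) * ∑ j, |x j| := by
  refine (neuron_lip u u' x).trans (le_trans (le_of_eq ?_) (abs_linear_le (fun j => u j - u' j) x))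
  rw [← Finset.sum_sub_distrib]
  simp only [sub_mul]

lemma abs_neuron_le_of_ball {u : Fin d → ℝ} (hu : ∑ j, u j ^ 2 ≤ 1) (x : Fin d → ℝ) :
    |neuron u x| ≤ ∑ j, |x j| := by
  refine (neuron_abs_le u x).trans ((Finset.abs_sum_le_sum_abs _ _).trans ?_)
  refine Finset.sum_le_sum fun j _ => ?_
  have h1 : u j ^ 2 ≤ 1 :=
    (Finset.single_le_sum (f := fun j => u j ^ 2) (fun _ _ => sq_nonneg _)
      (Finset.mem_univ j)).trans hu
  rw [abs_mul]
  exact mul_le_of_le_one_left (abs_nonneg _) ((sq_le_one_iff_abs_le_one _).1 h1)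

lemma memLp_absSum : MemLp (fun x : Fin d → ℝ => ∑ j, |x j|) 2 (_root_.stdGaussian d) :=
  memLp_finsetSum _ fun j _ => (memLp_coord j (by simp)).abs

lemma integrable_mul_neuron {q : (Fin d → ℝ) → ℝ} (hq : MemLp q 2 (_root_.stdGaussian d))
    (u : Fin d → ℝ) : Integrable (fun x => q x * neuron u x) (_root_.stdGaussian d) :=
  hq.integrable_mul (memLp_neuron u (p := 2) (by simp))

lemma continuous_correlation {q : (Fin d → ℝ) → ℝ} (hq : MemLp q 2 (_root_.stdGaussian d)) :
    Continuous fun u => ∫ x, q x * neuron u x ∂(_root_.stdGaussian d) := by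
  rw [continuous_iff_continuousAt]
  intro u
  rw [ContinuousAt, tendsto_iff_dist_tendsto_zero]
  have hX : Integrable (fun x : Fin d → ℝ => |q x| * ∑ j, |x j|) (_root_.stdGaussian d) :=
    hq.abs.integrable_mul memLp_absSum
  refine squeeze_zero (g := fun u' : Fin d → ℝ => (∑ j, |u' j - u j|) *
    ∫ x : Fin d → ℝ, |q x| * ∑ j, |x j| ∂(_root_.stdGaussian d))
    (fun _ => dist_nonneg) (fun u' => ?_) ?_
  · rw [Real.dist_eq, ← integral_sub (integrable_mul_neuron hq u') (integrable_mul_neuron hq u),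
      ← integral_const_mul]
    refine abs_integral_le_integral_abs.trans (integral_mono
      ((integrable_mul_neuron hq u').sub (integrable_mul_neuron hq u)).abs (hX.const_mul _)
      fun x => ?_)
    rw [← mul_sub, abs_mul]
    calc |q x| * |neuron u' x - neuron u x|
        ≤ |q x| * ((∑ j, |u' j - u j|) * ∑ j, |x j|) :=
          mul_le_mul_of_nonneg_left (abs_neuron_sub_le _ _ _) (abs_nonneg _)
      _ = _ := by ring
  · have hc : Continuous fun u' : Fin d → ℝ => (∑ j, |u' j - u j|) *
        ∫ x : Fin d → ℝ, |q x| * ∑ j, |x j| ∂(_root_.stdGaussian d) := by fun_prop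
    simpa using hc.tendsto u

lemma abs_reluNet_sub_le {α β : Fin k → ℝ} {w u : Fin k → Fin d → ℝ}
    (hw : ∀ i, ∑ j, w i j ^ 2 = 1) (x : Fin d → ℝ) :
    |reluNet β u x - reluNet α w x| ≤
      (∑ i, (|β i - α i| + |β i| * ∑ j, |u i j - w i j|)) * ∑ j, |x j| := by
  rw [reluNet_eq, reluNet_eq, ← Finset.sum_sub_distrib, Finset.sum_mul]
  refine (Finset.abs_sum_le_sum_abs _ _).trans (Finset.sum_le_sum fun i _ => ?_)
  have e : β i * neuron (u i) x - α i * neuron (w i) x =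
      (β i - α i) * neuron (w i) x + β i * (neuron (u i) x - neuron (w i) x) := by ring
  rw [e]
  refine (abs_add_le _ _).trans ?_
  rw [abs_mul, abs_mul, add_mul, mul_assoc]
  exact add_le_add
    (mul_le_mul_of_nonneg_left (abs_neuron_le_of_ball (hw i).le x) (abs_nonneg _))
    (mul_le_mul_of_nonneg_left (abs_neuron_sub_le _ _ _) (abs_nonneg _))

/-- Correlations with test neurons depend continuously on the parameters, uniformly over the unit
ball of test directions. -/
lemma abs_correlation_sub_le {α β : Fin k → ℝ} {w u : Fin k → Fin d → ℝ}
    (hw : ∀ i, ∑ j, w i j ^ 2 = 1) {v : Fin d → ℝ} (hv : ∑ j, v j ^ 2 ≤ 1) :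
    |(∫ x, reluNet β u x * neuron v x ∂(_root_.stdGaussian d)) -
      ∫ x, reluNet α w x * neuron v x ∂(_root_.stdGaussian d)| ≤
      (∑ i, (|β i - α i| + |β i| * ∑ j, |u i j - w i j|)) *
        ∫ x : Fin d → ℝ, (∑ j, |x j|) ^ 2 ∂(_root_.stdGaussian d) := by
  have i1 := integrable_mul_neuron (memLp_reluNet β u (by simp)) v
  have i2 := integrable_mul_neuron (memLp_reluNet α w (by simp)) v
  rw [← integral_sub i1 i2, ← integral_const_mul]
  refine abs_integral_le_integral_abs.trans (integral_mono
      (i1.sub i2).abs (memLp_absSum.integrable_sq.const_mul _) fun x => ?_)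
  rw [← sub_mul, abs_mul, sq, ← mul_assoc]
  exact mul_le_mul (abs_reluNet_sub_le hw x) (abs_neuron_le_of_ball hv x) (abs_nonneg _)
    ((abs_nonneg _).trans (abs_reluNet_sub_le hw x))

lemma integral_reluNet (α : Fin k → ℝ) (w : Fin k → Fin d → ℝ) :
    ∫ x, reluNet α w x ∂(_root_.stdGaussian d) =
      ∑ i, α i * ∫ x, neuron (w i) x ∂(_root_.stdGaussian d) := by
  simp only [reluNet_eq]
  rw [integral_finsetSum _ fun i _ =>
    ((memLp_neuron (w i) (p := 1) (by simp)).integrable le_rfl).const_mul _]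
  simp only [integral_const_mul]

lemma integral_mul_reluNet {q : (Fin d → ℝ) → ℝ} (hq : MemLp q 2 (_root_.stdGaussian d))
    (α : Fin k → ℝ) (w : Fin k → Fin d → ℝ) :
    ∫ x, q x * reluNet α w x ∂(_root_.stdGaussian d) =
      ∑ i, α i * ∫ x, q x * neuron (w i) x ∂(_root_.stdGaussian d) := by
  have e : ∀ x, q x * reluNet α w x = ∑ i, α i * (q x * neuron (w i) x) := by
    intro x
    rw [reluNet_eq, Finset.mul_sum]
    exact Finset.sum_congr rfl fun i _ => by ring
  simp only [e]
  rw [integral_finsetSum _ fun i _ => (integrable_mul_neuron hq (w i)).const_mul _]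
  simp only [integral_const_mul]

lemma sq_integral_le {q : (Fin d → ℝ) → ℝ} (hq : MemLp q 2 (_root_.stdGaussian d)) :
    (∫ x, q x ∂(_root_.stdGaussian d)) ^ 2 ≤ ∫ x, q x ^ 2 ∂(_root_.stdGaussian d) := by
  have h1 := variance_nonneg q (_root_.stdGaussian d)
  rw [variance_eq_sub hq] at h1
  simpa using h1

/-- If all correlations of `f - h` with unit-ball neurons are small, then so is `E (f - h)²`: one
factor `f - h` expands into neurons with total weight `∑ α + ∑ β`. Positivity of the coefficients makes
`∑ α` comparable to `E f`, hence bounded by `5 ‖f‖`, and makes `∑ β` bounded by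
`5 (∑ α + ‖f - h‖)`; the resulting `‖f - h‖²` on the right is absorbed by the left side. -/
lemma risk_bound {α β : Fin k → ℝ} {w u : Fin k → Fin d → ℝ}
    (hα : ∀ i, 0 < α i) (hw : ∀ i, ∑ j, w i j ^ 2 = 1)
    (hβ : ∀ i, 0 < β i) (hu : ∀ i, ∑ j, u i j ^ 2 = 1) {ε σ : ℝ} (hε : 0 < ε) (hε1 : ε < 1)
    (hσ : 0 ≤ σ)
    (hc : ∀ v : Fin d → ℝ, ∑ j, v j ^ 2 ≤ 1 →
      |∫ x, (reluNet α w x - reluNet β u x) * neuron v x ∂(_root_.stdGaussian d)| ≤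
        ε ^ 2 / 200 * (3 * σ + ∑ i, α i + 2 * ∑ i, β i)) :
    ∫ x, (reluNet α w x - reluNet β u x) ^ 2 ∂(_root_.stdGaussian d) ≤
      72 * ε ^ 2 * (σ ^ 2 + ∫ x, reluNet α w x ^ 2 ∂(_root_.stdGaussian d)) := by
  set S := ∑ i, α i
  set R := ∑ i, β i
  set D := ∫ x, (reluNet α w x - reluNet β u x) ^ 2 ∂(_root_.stdGaussian d) with hD
  set δ := ε ^ 2 / 200 with hδ
  have hS : 0 ≤ S := Finset.sum_nonneg fun i _ => (hα i).le
  have hR : 0 ≤ R := Finset.sum_nonneg fun i _ => (hβ i).le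
  have mf : MemLp (reluNet α w) 2 (_root_.stdGaussian d) := memLp_reluNet α w (by simp)
  have mh : MemLp (reluNet β u) 2 (_root_.stdGaussian d) := memLp_reluNet β u (by simp)
  have mq : MemLp (fun x => reluNet α w x - reluNet β u x) 2 (_root_.stdGaussian d) := mf.sub mh
  have hD0 : 0 ≤ D := integral_nonneg fun x => sq_nonneg _
  have if1 := mf.integrable (by norm_num)
  have ih1 := mh.integrable (by norm_num)
  have hK : 0 ≤ δ * (3 * σ + S + 2 * R) := by positivity
  -- expand one factor of the square along the neurons of both networks
  have hDle : D ≤ (S + R) * (δ * (3 * σ + S + 2 * R)) := by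
    have e : D = (∫ x, (reluNet α w x - reluNet β u x) * reluNet α w x ∂(_root_.stdGaussian d)) -
        ∫ x, (reluNet α w x - reluNet β u x) * reluNet β u x ∂(_root_.stdGaussian d) := by
      have j1 : Integrable (fun x => (reluNet α w x - reluNet β u x) * reluNet α w x)
          (_root_.stdGaussian d) := mq.integrable_mul mf
      have j2 : Integrable (fun x => (reluNet α w x - reluNet β u x) * reluNet β u x)
          (_root_.stdGaussian d) := mq.integrable_mul mh
      rw [← integral_sub j1 j2]
      refine integral_congr_ae (Filter.Eventually.of_forall fun x => ?_)
      ring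
    rw [e, integral_mul_reluNet mq, integral_mul_reluNet mq, add_mul, Finset.sum_mul,
      Finset.sum_mul, sub_eq_add_neg, ← Finset.sum_neg_distrib]
    refine add_le_add (Finset.sum_le_sum fun i _ => ?_) (Finset.sum_le_sum fun i _ => ?_)
    · exact mul_le_mul_of_nonneg_left ((le_abs_self _).trans (hc _ (hw i).le)) (hα i).le
    · rw [← mul_neg]
      exact mul_le_mul_of_nonneg_left ((neg_le_abs _).trans (hc _ (hu i).le)) (hβ i).le
  have hEf1 : S * (1 / 5) ≤ ∫ x, reluNet α w x ∂(_root_.stdGaussian d) := by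
    rw [integral_reluNet, Finset.sum_mul]
    exact Finset.sum_le_sum fun i _ =>
      mul_le_mul_of_nonneg_left (integral_neuron_ge (hw i)) (hα i).le
  have hEf2 : ∫ x, reluNet α w x ∂(_root_.stdGaussian d) ≤ S := by
    rw [integral_reluNet]
    exact Finset.sum_le_sum fun i _ =>
      mul_le_of_le_one_right (hα i).le (integral_neuron_le (hw i).le)
  have hEh1 : R * (1 / 5) ≤ ∫ x, reluNet β u x ∂(_root_.stdGaussian d) := by
    rw [integral_reluNet, Finset.sum_mul]
    exact Finset.sum_le_sum fun i _ =>
      mul_le_mul_of_nonneg_left (integral_neuron_ge (hu i)) (hβ i).le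
  have hdiff := sq_integral_le mq
  rw [integral_sub if1 ih1, ← hD] at hdiff
  have hdiff2 := (abs_le.1 (Real.abs_le_sqrt hdiff)).1
  have hS2 : S ^ 2 ≤ 25 * ∫ x, reluNet α w x ^ 2 ∂(_root_.stdGaussian d) := by
    have h1 := sq_integral_le mf
    have h2 : (S * (1 / 5)) ^ 2 ≤ (∫ x, reluNet α w x ∂(_root_.stdGaussian d)) ^ 2 := by
      gcongr
    nlinarith
  set t := √D with ht
  have ht0 : 0 ≤ t := Real.sqrt_nonneg _
  have htD : t ^ 2 = D := Real.sq_sqrt hD0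
  have hRle : R ≤ 5 * S + 5 * t := by linarith
  have hδ0 : 0 ≤ δ := by positivity
  have hδ1 : δ ≤ 1 / 200 := by rw [hδ]; nlinarith
  set M := σ + S with hM
  have hM0 : 0 ≤ M := by positivity
  have h1 : D ≤ δ * (2 * (6 * M + 5 * t) ^ 2) := by
    have h2 : (S + R) * (3 * σ + S + 2 * R) ≤ (6 * M + 5 * t) * (2 * (6 * M + 5 * t)) :=
      mul_le_mul (by linarith) (by linarith) (by positivity) (by positivity)
    calc D ≤ (S + R) * (δ * (3 * σ + S + 2 * R)) := hDle
      _ = δ * ((S + R) * (3 * σ + S + 2 * R)) := by ring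
      _ ≤ δ * ((6 * M + 5 * t) * (2 * (6 * M + 5 * t))) := mul_le_mul_of_nonneg_left h2 hδ0
      _ = _ := by ring
  have h3 : (6 * M + 5 * t) ^ 2 ≤ 72 * M ^ 2 + 50 * D := by
    nlinarith [sq_nonneg (6 * M - 5 * t)]
  have h4 : D ≤ δ * (144 * M ^ 2) + δ * (100 * D) := by
    have := mul_le_mul_of_nonneg_left h3 hδ0
    linarith
  have h5 : δ * (100 * D) ≤ 1 / 200 * (100 * D) := by gcongr
  have h6 : D ≤ 288 * δ * M ^ 2 := by linarith
  have h7 : M ^ 2 ≤ 2 * (σ ^ 2 + S ^ 2) := by nlinarith [sq_nonneg (σ - S)]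
  have h8 : M ^ 2 ≤ 50 * (σ ^ 2 + ∫ x, reluNet α w x ^ 2 ∂(_root_.stdGaussian d)) := by
    nlinarith [sq_nonneg σ]
  calc D ≤ 288 * δ * M ^ 2 := h6
    _ ≤ 288 * δ * (50 * (σ ^ 2 + ∫ x, reluNet α w x ^ 2 ∂(_root_.stdGaussian d))) :=
        mul_le_mul_of_nonneg_left h8 (by positivity)
    _ = _ := by rw [hδ]; ring

end Deterministic

/-! ### Dense sequences of tests and of parameters -/

section Estimator

variable {d k : ℕ}

/-- A sequence dense in the Euclidean unit ball and starting at the origin: it tests every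
bound on a continuous function. -/
lemma exists_testSeq (d : ℕ) : ∃ W : ℕ → Fin d → ℝ, W 0 = 0 ∧ (∀ n, ∑ j, W n j ^ 2 ≤ 1) ∧
    ∀ Φ : (Fin d → ℝ) → ℝ, Continuous Φ → ∀ c, (∀ n, |Φ (W n)| ≤ c) →
      ∀ v, ∑ j, v j ^ 2 ≤ 1 → |Φ v| ≤ c := by
  have : Nonempty {v : Fin d → ℝ // ∑ j, v j ^ 2 ≤ 1} := ⟨⟨0, by simp⟩⟩
  let D := TopologicalSpace.denseSeq {v : Fin d → ℝ // ∑ j, v j ^ 2 ≤ 1}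
  refine ⟨fun n => Nat.casesOn n 0 fun n => (D n).1, rfl, ?_, ?_⟩
  · rintro (_ | n)
    · simp
    · exact (D n).2
  · intro Φ hΦ c h v hv
    have hcl : IsClosed {p : {v : Fin d → ℝ // ∑ j, v j ^ 2 ≤ 1} | |Φ p.1| ≤ c} :=
      isClosed_le (by fun_prop) continuous_const
    exact (TopologicalSpace.denseRange_denseSeq
      {v : Fin d → ℝ // ∑ j, v j ^ 2 ≤ 1}).induction_on
      (p := fun p => |Φ p.1| ≤ c) ⟨v, hv⟩ hcl fun n => h (n + 1)

/-- A sequence of admissible parameters (positive coefficients, unit weights), dense among them. -/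
lemma exists_paramSeq (hd : 1 ≤ d) (k : ℕ) :
    ∃ Q : ℕ → (Fin k → ℝ) × (Fin k → Fin d → ℝ),
      (∀ n, (∀ i, 0 < (Q n).1 i) ∧ ∀ i, ∑ j, (Q n).2 i j ^ 2 = 1) ∧
      ∀ U : Set ((Fin k → ℝ) × (Fin k → Fin d → ℝ)), IsOpen U →
        ∀ p ∈ U, (∀ i, 0 < p.1 i) → (∀ i, ∑ j, p.2 i j ^ 2 = 1) → ∃ n, Q n ∈ U := by
  let P := {p : (Fin k → ℝ) × (Fin k → Fin d → ℝ) //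
    (∀ i, 0 < p.1 i) ∧ ∀ i, ∑ j, p.2 i j ^ 2 = 1}
  have : Nonempty P := ⟨⟨(fun _ => 1, fun _ => Pi.single ⟨0, hd⟩ 1), by simp,
    by simp [Pi.single_apply]⟩⟩
  refine ⟨fun n => (TopologicalSpace.denseSeq P n).1, fun n => (TopologicalSpace.denseSeq P n).2,
    fun U hU p hp h1 h2 => ?_⟩
  exact (TopologicalSpace.denseRange_denseSeq P).exists_mem_open
    (hU.preimage continuous_subtype_val) ⟨⟨p, h1, h2⟩, hp⟩

end Estimator

/-! ### The estimator and the good event -/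

section Assembly

variable {d k : ℕ}

/-- A network parameter `p` is feasible for the sample `s` when, for every test neuron `W i`, the
empirical correlation of the labels with the test neuron agrees with the exact correlation of the
network `p`, up to `2 δ (σ + ∑ p.1)` per sample. -/
def Feasible {m : ℕ} (W : ℕ → Fin d → ℝ) (δ σ : ℝ) (p : (Fin k → ℝ) × (Fin k → Fin d → ℝ))
    (s : Fin m → (Fin d → ℝ) × ℝ) : Prop :=
  ∀ i, |(∑ j, (s j).2 * neuron (W i) (s j).1) -
    m * ∫ x, reluNet p.1 p.2 x * neuron (W i) x ∂(_root_.stdGaussian d)| ≤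
      2 * (m * δ * (σ + ∑ l, p.1 l))

lemma measurableSet_feasible {m : ℕ} (W : ℕ → Fin d → ℝ) (δ σ : ℝ)
    (p : (Fin k → ℝ) × (Fin k → Fin d → ℝ)) :
    MeasurableSet {s : Fin m → (Fin d → ℝ) × ℝ | Feasible W δ σ p s} := by
  simp only [Feasible, Set.ofPred_forall]
  refine MeasurableSet.iInter fun i => measurableSet_le ?_ measurable_const
  refine ((Finset.measurable_sum _ fun j _ => ?_).sub_const _).abs
  exact (measurable_snd.comp (measurable_pi_apply j)).mul
    ((measurable_neuron (W i)).comp (measurable_fst.comp (measurable_pi_apply j)))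

/-- Measurable selection of the first feasible member of a sequence of parameters; the first member
is returned on samples for which no member is feasible. -/
lemma exists_estimator {m : ℕ} (W : ℕ → Fin d → ℝ) (δ σ : ℝ)
    (Q : ℕ → (Fin k → ℝ) × (Fin k → Fin d → ℝ)) :
    ∃ A : (Fin m → (Fin d → ℝ) × ℝ) → (Fin k → ℝ) × (Fin k → Fin d → ℝ),
      Measurable A ∧ (∀ s, ∃ n, A s = Q n) ∧
        ∀ s n, Feasible W δ σ (Q n) s → Feasible W δ σ (A s) s := by
  classical
  have hex : ∀ s : Fin m → (Fin d → ℝ) × ℝ,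
      ∃ n, Feasible W δ σ (Q n) s ∨ ∀ n', ¬ Feasible W δ σ (Q n') s := by
    intro s
    by_cases h : ∃ n, Feasible W δ σ (Q n) s
    · exact h.imp fun n hn => Or.inl hn
    · exact ⟨0, Or.inr (not_exists.1 h)⟩
  refine ⟨fun s => Q (Nat.find (hex s)), ?_, fun s => ⟨_, rfl⟩, fun s n hn => ?_⟩
  · refine (measurable_from_nat (f := Q)).comp (measurable_find hex fun n => ?_)
    have h1 : MeasurableSet {s : Fin m → (Fin d → ℝ) × ℝ | ∀ n', ¬ Feasible W δ σ (Q n') s} := by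
      rw [Set.ofPred_forall]
      exact MeasurableSet.iInter fun n' => (measurableSet_feasible W δ σ (Q n')).compl
    exact (measurableSet_feasible W δ σ (Q n)).union h1
  · exact (Nat.find_spec (hex s)).resolve_right fun h => h n hn

/-- On samples whose empirical correlations deviate little, the target can be approximated by a
feasible member of any dense sequence of parameters. -/
lemma exists_feasible {m : ℕ} {W : ℕ → Fin d → ℝ} (hW : ∀ n, ∑ j, W n j ^ 2 ≤ 1) {δ σ : ℝ}
    (hδ : 0 < δ) {Q : ℕ → (Fin k → ℝ) × (Fin k → Fin d → ℝ)}
    (hQ : ∀ U : Set ((Fin k → ℝ) × (Fin k → Fin d → ℝ)), IsOpen U →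
        ∀ p ∈ U, (∀ i, 0 < p.1 i) → (∀ i, ∑ j, p.2 i j ^ 2 = 1) → ∃ n, Q n ∈ U)
    {α : Fin k → ℝ} {w : Fin k → Fin d → ℝ} (hα : ∀ i, 0 < α i) (hw : ∀ i, ∑ j, w i j ^ 2 = 1)
    (hM : 0 < σ + ∑ i, α i) {s : Fin m → (Fin d → ℝ) × ℝ}
    (hs : ∀ n, |(∑ j, (s j).2 * neuron (W n) (s j).1) -
      m * ∫ x, reluNet α w x * neuron (W n) x ∂(_root_.stdGaussian d)| ≤
        m * δ * (σ + ∑ i, α i)) :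
    ∃ n, Feasible W δ σ (Q n) s := by
  -- the condition is open in `p` and holds strictly at the target, whose distance term vanishes
  obtain ⟨n, hn⟩ := hQ {p | δ * (σ + ∑ i, α i) +
      (∑ i, (|p.1 i - α i| + |p.1 i| * ∑ j, |p.2 i j - w i j|)) *
        (∫ x : Fin d → ℝ, (∑ j, |x j|) ^ 2 ∂(_root_.stdGaussian d)) <
      2 * (δ * (σ + ∑ i, p.1 i))}
    (isOpen_lt (by fun_prop) (by fun_prop)) (α, w)
    (by simp only [Set.mem_ofPred_eq, sub_self, abs_zero, Finset.sum_const_zero, mul_zero, add_zero,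
          zero_mul]
        have := mul_pos hδ hM
        linarith) hα hw
  refine ⟨n, fun i => ?_⟩
  have h1 := abs_correlation_sub_le (β := (Q n).1) (u := (Q n).2) (α := α) hw (hW i)
  have h2 := hs i
  have hm0 : (0 : ℝ) ≤ m := Nat.cast_nonneg m
  simp only [Set.mem_ofPred_eq] at hn
  set a := ∑ j, (s j).2 * neuron (W i) (s j).1
  set b := ∫ x, reluNet α w x * neuron (W i) x ∂(_root_.stdGaussian d)
  set c := ∫ x, reluNet (Q n).1 (Q n).2 x * neuron (W i) x ∂(_root_.stdGaussian d)
  have h3 : |a - m * c| ≤ |a - m * b| + m * |c - b| := by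
    calc |a - m * c| = |(a - m * b) - m * (c - b)| := by ring_nf
      _ ≤ |a - m * b| + |m * (c - b)| := abs_sub _ _
      _ = _ := by rw [abs_mul, abs_of_nonneg hm0]
  have h4 := mul_le_mul_of_nonneg_left h1 hm0
  have h5 := mul_le_mul_of_nonneg_left hn.le hm0
  linarith

/-- A feasible parameter has correlations close to those of the target, uniformly over all test
directions in the unit ball. -/
lemma correlation_of_feasible {m : ℕ} (hm : 0 < m) {W : ℕ → Fin d → ℝ}
    (hW : ∀ Φ : (Fin d → ℝ) → ℝ, Continuous Φ → ∀ c, (∀ n, |Φ (W n)| ≤ c) →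
      ∀ v, ∑ j, v j ^ 2 ≤ 1 → |Φ v| ≤ c) {δ σ : ℝ}
    {α : Fin k → ℝ} {w : Fin k → Fin d → ℝ} {p : (Fin k → ℝ) × (Fin k → Fin d → ℝ)}
    {s : Fin m → (Fin d → ℝ) × ℝ}
    (hs : ∀ n, |(∑ j, (s j).2 * neuron (W n) (s j).1) -
      m * ∫ x, reluNet α w x * neuron (W n) x ∂(_root_.stdGaussian d)| ≤
        m * δ * (σ + ∑ i, α i))
    (hp : Feasible W δ σ p s) (v : Fin d → ℝ) (hv : ∑ j, v j ^ 2 ≤ 1) :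
    |∫ x, (reluNet α w x - reluNet p.1 p.2 x) * neuron v x ∂(_root_.stdGaussian d)| ≤
      δ * (3 * σ + ∑ i, α i + 2 * ∑ i, p.1 i) := by
  have mf : MemLp (reluNet α w) 2 (_root_.stdGaussian d) := memLp_reluNet α w (by simp)
  have mh : MemLp (reluNet p.1 p.2) 2 (_root_.stdGaussian d) := memLp_reluNet _ _ (by simp)
  have mq : MemLp (fun x => reluNet α w x - reluNet p.1 p.2 x) 2 (_root_.stdGaussian d) :=
    mf.sub mh
  refine hW _ (continuous_correlation mq) _ (fun n => ?_) v hv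
  have hm0 : (0 : ℝ) < m := Nat.cast_pos.2 hm
  simp only [sub_mul]
  rw [integral_sub (integrable_mul_neuron mf _) (integrable_mul_neuron mh _)]
  have h1 := hs n
  have h2 := hp n
  set a := ∑ j, (s j).2 * neuron (W n) (s j).1
  set b := ∫ x, reluNet α w x * neuron (W n) x ∂(_root_.stdGaussian d)
  set c := ∫ x, reluNet p.1 p.2 x * neuron (W n) x ∂(_root_.stdGaussian d)
  have h3 : m * |b - c| ≤ |a - m * c| + |a - m * b| := by
    calc m * |b - c| = |(a - m * c) - (a - m * b)| := by
          rw [← abs_of_pos hm0, ← abs_mul, abs_of_pos hm0]; ring_nf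
      _ ≤ _ := abs_sub _ _
  refine le_of_mul_le_mul_left (h3.trans ((add_le_add h2 h1).trans (le_of_eq ?_))) hm0
  ring

/-- The sample size needed by the deviation bound is polynomial in `k / ε` and linear in `d`. -/
lemma sample_size_le (hd : 1 ≤ d) (hk : 1 ≤ k) {ε : ℝ} (hε : 0 < ε) (hε1 : ε < 1) :
    (⌈12800 * (d : ℝ) / (ε ^ 2 / 200) ^ 2⌉₊ : ℝ) ≤
      600000000 * d * Real.log (d + 2) ^ (600000000 : ℝ) *
        ((k : ℝ) / ε) ^ (600000000 : ℝ) := by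
  have hd' : (1 : ℝ) ≤ d := by exact_mod_cast hd
  have hk' : (1 : ℝ) ≤ k := by exact_mod_cast hk
  have hlog : 1 ≤ Real.log (d + 2) := by
    rw [Real.le_log_iff_exp_le (by linarith)]
    linarith [Real.exp_one_lt_d9]
  have hL : 1 ≤ Real.log (d + 2) ^ (600000000 : ℝ) := Real.one_le_rpow hlog (by norm_num)
  have hinv : 1 ≤ 1 / ε := by rw [le_div_iff₀ hε]; linarith
  have hke : 1 / ε ≤ (k : ℝ) / ε := by gcongr
  have hK : (1 / ε) ^ 4 ≤ ((k : ℝ) / ε) ^ (600000000 : ℝ) := by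
    calc (1 / ε) ^ 4 ≤ ((k : ℝ) / ε) ^ 4 := by gcongr
      _ = ((k : ℝ) / ε) ^ (4 : ℝ) := by norm_cast
      _ ≤ _ := Real.rpow_le_rpow_of_exponent_le (hinv.trans hke) (by norm_num)
  have hE : 1 ≤ (1 / ε) ^ 4 := one_le_pow₀ hinv
  have e : 12800 * (d : ℝ) / (ε ^ 2 / 200) ^ 2 = 512000000 * (d * (1 / ε) ^ 4) := by
    field_simp; norm_num
  have h1 : 1 ≤ d * (1 / ε) ^ 4 := one_le_mul_of_one_le_of_one_le hd' hE
  have h0 := Nat.ceil_lt_add_one (a := 12800 * (d : ℝ) / (ε ^ 2 / 200) ^ 2) (by positivity)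
  have h2 : d * (1 / ε) ^ 4 ≤ (d * Real.log (d + 2) ^ (600000000 : ℝ)) *
      ((k : ℝ) / ε) ^ (600000000 : ℝ) :=
    mul_le_mul (le_mul_of_one_le_right (by linarith) hL) hK (by positivity) (by positivity)
  rw [mul_assoc, mul_assoc, ← mul_assoc (d : ℝ)]
  linarith

/-- With probability at least `9/10` all empirical correlations with test neurons are accurate. -/
lemma prob_good (hd : 1 ≤ d) (hk : 1 ≤ k) {α : Fin k → ℝ} {w : Fin k → Fin d → ℝ} {ν : Measure ℝ}
    {δ σ : ℝ} (hδ : 0 < δ) (hσ : 0 ≤ σ) (hα : ∀ i, 0 < α i) (hw : ∀ i, ∑ j, w i j ^ 2 = 1)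
    (hν : IsZeroMeanSubgaussian ν σ) {W : ℕ → Fin d → ℝ} (hW : ∀ n, ∑ j, W n j ^ 2 ≤ 1)
    (h0 : W 0 = 0) {m : ℕ} (hm : 12800 * (d : ℝ) / δ ^ 2 ≤ m) :
    ENNReal.ofReal (9 / 10) ≤ sampleMeasure d m (reluNet α w) ν
      {s | ∀ n, |(∑ j, (s j).2 * neuron (W n) (s j).1) -
        m * ∫ x, reluNet α w x * neuron (W n) x ∂(_root_.stdGaussian d)| ≤
          m * δ * (σ + ∑ i, α i)} := by
  have hP := isProbabilityMeasure_sampleLaw α w hν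
  have hS : 0 < ∑ i, α i :=
    Finset.sum_pos (fun i _ => hα i) ⟨⟨0, hk⟩, Finset.mem_univ _⟩
  have hB : ∑ i, ∫ z, (z.2 * z.1 i) ^ 2 ∂(sampleLaw d (reluNet α w) ν) ≤
      8 * d * (σ + ∑ i, α i) ^ 2 := by
    refine (Finset.sum_le_sum fun i _ =>
      (sampleLaw_second_moment hα hw hν hσ i).2).trans (le_of_eq ?_)
    simp only [Finset.sum_const, Finset.card_univ, Fintype.card_fin, nsmul_eq_mul]
    ring
  have hdev := deviation_seq (fun i => (sampleLaw_second_moment hα hw hν hσ i).1)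
    (by positivity : 0 < σ + ∑ i, α i) hδ hd hB W hW h0 hm
  simp only [sampleLaw_correlation hν hσ] at hdev
  change _ ≤ (Measure.pi fun _ : Fin m => sampleLaw d (reluNet α w) ν) _
  set μ := Measure.pi fun _ : Fin m => sampleLaw d (reluNet α w) ν
  set G := {s : Fin m → (Fin d → ℝ) × ℝ | ∀ n, |(∑ j, (s j).2 * neuron (W n) (s j).1) -
        m * ∫ x, reluNet α w x * neuron (W n) x ∂(_root_.stdGaussian d)| ≤
          m * δ * (σ + ∑ i, α i)} with hG
  have hc : μ Gᶜ ≤ ENNReal.ofReal (1 / 10) := by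
    refine (measure_mono fun s hs => ?_).trans hdev
    simp only [hG, Set.mem_compl_iff, Set.mem_ofPred_eq, not_forall, not_le] at hs ⊢
    exact hs.imp fun n hn => hn.le
  have h1 : (1 : ENNReal) ≤ μ G + μ Gᶜ := by
    rw [← measure_univ (μ := μ)]
    exact (measure_mono (Set.union_compl_self G).ge).trans (measure_union_le _ _)
  have h2 : ENNReal.ofReal (9 / 10) = 1 - ENNReal.ofReal (1 / 10) := by
    rw [← ENNReal.ofReal_one, ← ENNReal.ofReal_sub _ (by norm_num)]
    norm_num
  rw [h2, tsub_le_iff_right]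
  exact h1.trans (add_le_add le_rfl hc)

end Assembly

theorem stmt0 :
    ∃ C0 c0 : ℝ, 0 < C0 ∧ 0 < c0 ∧
      ∀ d k : ℕ, 1 ≤ d → 1 ≤ k → ∀ ε σ : ℝ, 0 < ε → ε < 1 → 0 ≤ σ →
        ∃ m : ℕ,
          (m : ℝ) ≤ C0 * d * Real.log (d + 2) ^ C0 * ((k : ℝ) / ε) ^ C0 ∧
          ∃ A : (Fin m → (Fin d → ℝ) × ℝ) → (Fin k → ℝ) × (Fin k → Fin d → ℝ),
            Measurable A ∧
            (∀ s, (∀ i, 0 < (A s).1 i) ∧ ∀ i, ∑ j, ((A s).2 i j) ^ 2 = 1) ∧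
            ∀ (α : Fin k → ℝ) (w : Fin k → Fin d → ℝ),
              (∀ i, 0 < α i) → (∀ i, ∑ j, w i j ^ 2 = 1) →
              ∀ ν : Measure ℝ, IsZeroMeanSubgaussian ν σ →
                ENNReal.ofReal (9 / 10) ≤
                  sampleMeasure d m (reluNet α w) ν
                    {s | ∫ x, (reluNet α w x - reluNet (A s).1 (A s).2 x) ^ 2
                            ∂stdGaussian d
                          ≤ c0 * ε ^ 2 *
                            (σ ^ 2 + ∫ x, reluNet α w x ^ 2 ∂stdGaussian d)} := by
  refine ⟨600000000, 72, by norm_num, by norm_num, fun d k hd hk ε σ hε hε1 hσ => ?_⟩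
  have hδ : 0 < ε ^ 2 / 200 := by positivity
  have hd' : (0 : ℝ) < d := by exact_mod_cast hd
  obtain ⟨W, hW0, hWball, hWdense⟩ := exists_testSeq d
  obtain ⟨Q, hQvalid, hQdense⟩ := exists_paramSeq hd k
  obtain ⟨A, hAm, hAQ, hAfeas⟩ := exists_estimator
    (m := ⌈12800 * (d : ℝ) / (ε ^ 2 / 200) ^ 2⌉₊) W (ε ^ 2 / 200) σ Q
  have hvalid : ∀ s, (∀ i, 0 < (A s).1 i) ∧ ∀ i, ∑ j, (A s).2 i j ^ 2 = 1 := fun s => by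
    obtain ⟨n, hn⟩ := hAQ s
    rw [hn]
    exact hQvalid n
  refine ⟨_, sample_size_le hd hk hε hε1, A, hAm, hvalid, fun α w hα hw ν hν => ?_⟩
  refine (prob_good hd hk hδ hσ hα hw hν hWball hW0 (Nat.le_ceil _)).trans
    (measure_mono fun s hs => ?_)
  have hM : 0 < σ + ∑ i, α i := add_pos_of_nonneg_of_pos hσ
    (Finset.sum_pos (fun i _ => hα i) ⟨⟨0, hk⟩, Finset.mem_univ _⟩)
  obtain ⟨n, hn⟩ := exists_feasible hWball hδ hQdense hα hw hM hs
  exact risk_bound hα hw (hvalid s).1 (hvalid s).2 hε hε1 hσ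
    (correlation_of_feasible (Nat.ceil_pos.2 (by positivity)) hWdense hs (hAfeas s n hn))
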